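/- Let P = A ∪ B be an ℓ-divided set with A not in convex position, |A| ≥ 5 and |B| ≥ 5, with ℓ vertical, A to the left of ℓ, and all points of P having distinct x-coordinates. If W_i and W_{i+1} are consecutive a*-wedges with w_i = 2 = w_{i+1} and 1 ≤ i < t, then there is an ℓ-divided 5-hole in P. -/

import Mathlib

noncomputable section

/-- Points of the plane. -/
abbrev Pt : Type := ℝ × ℝ

/-- The cross product (signed area) of two planar vectors. -/
def cross2 (u v : Pt) : ℝ := u.1 * v.2 - u.2 * v.1

/-- The dot product of two planar vectors. -/
def dotp (v p : Pt) : ℝ := v.1 * p.1 + v.2 * p.2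

/-- A set of points in the plane is in general position if no three of its points
are collinear. -/
def GenPos (P : Set Pt) : Prop :=
  ∀ p ∈ P, ∀ q ∈ P, ∀ r ∈ P, p ≠ q → p ≠ r → q ≠ r →
    ¬ Collinear ℝ ({p, q, r} : Set Pt)

/-- A set of points is in convex position if no point of the set lies in the convex
hull of the other points. -/
def ConvexPos (S : Set Pt) : Prop :=
  ∀ p ∈ S, p ∉ convexHull ℝ (S \ {p})

/-- `H` is a `k`-hole in `P`: a subset of `P` of size `k` in convex position whose
convex hull contains no point of `P \ H`. -/
def IsKHole (k : ℕ) (P H : Finset Pt) : Prop :=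
  H ⊆ P ∧ H.card = k ∧ ConvexPos (↑H : Set Pt) ∧
    ∀ p ∈ P, p ∉ H → p ∉ convexHull ℝ (↑H : Set Pt)

/-- The number of `k`-holes in `P`. -/
def numKHoles (k : ℕ) (P : Finset Pt) : ℕ :=
  Set.ncard {H : Finset Pt | IsKHole k P H}

/-- For an `ℓ`-divided set `P = A ∪ B`, an `ℓ`-divided 5-hole is a 5-hole in `A ∪ B`
containing points of both `A` and `B`. -/
def DividedFiveHole (A B H : Finset Pt) : Prop :=
  IsKHole 5 (A ∪ B) H ∧ (↑H ∩ ↑A : Set Pt).Nonempty ∧ (↑H ∩ ↑B : Set Pt).Nonempty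

/-- `x` is an extremal point of `P`: it lies on the boundary of the convex hull of `P`. -/
def OnHullBoundary (P : Finset Pt) (x : Pt) : Prop :=
  x ∈ frontier (convexHull ℝ (↑P : Set Pt))

/-- An `ℓ`-divided set `C = A ∪ B` is `ℓ`-critical if neither part is in convex position
and, for every extremal point `x` of `C`, one of the sets `(C \ {x}) ∩ A` and
`(C \ {x}) ∩ B` is in convex position. -/
def LCritical (A B : Finset Pt) : Prop :=
  ¬ ConvexPos (↑A : Set Pt) ∧ ¬ ConvexPos (↑B : Set Pt) ∧
    ∀ x ∈ A ∪ B, OnHullBoundary (A ∪ B) x →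
      (ConvexPos (↑(A.erase x) : Set Pt) ∨ ConvexPos (↑(B.erase x) : Set Pt))

/-- The closed wedge with apex `a` swept clockwise from the ray `a→p` to the ray `a→q`.
If the clockwise angle from `a→p` to `a→q` is at most `π` the wedge is convex, otherwise
it is the corresponding reflex region. -/
def Wedge (a p q : Pt) : Set Pt :=
  if cross2 (p - a) (q - a) ≤ 0 then
    {x | cross2 (p - a) (x - a) ≤ 0 ∧ 0 ≤ cross2 (q - a) (x - a)}
  else
    {x | cross2 (p - a) (x - a) ≤ 0 ∨ 0 ≤ cross2 (q - a) (x - a)}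

/-- `W` is an `a`-wedge of `A`: one of the closed regions into which the rays from `a`
through the other points of `A` partition the plane, i.e. a wedge spanned by two
points of `A \ {a}` that are angularly consecutive around `a` (no other point of `A`
lies in the wedge). -/
def IsAWedge (A : Finset Pt) (a : Pt) (W : Set Pt) : Prop :=
  ∃ p ∈ A.erase a, ∃ q ∈ A.erase a, p ≠ q ∧ W = Wedge a p q ∧
    (↑A : Set Pt) ∩ Wedge a p q ⊆ {a, p, q}

/-- The combinatorial data of the `a*`-wedges of an `ℓ`-divided set `P = A ∪ B`, where
`ℓ` is the vertical line `x = x0` and `A` lies to its left: `aStar` is the rightmost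
interior point `a*` of `A`; `lbl` is the clockwise cyclic labeling `a_0, a_1, …` of
`A \ {a*}` (period `|A| - 1`), so that the `k`-th wedge `W_k` is swept clockwise from
the ray through `lbl (k-1)` to the ray through `lbl k` and contains no other point
of `A`; the wedges `W_1, …, W_t` are exactly those meeting `ℓ`, in top-to-bottom
order along `ℓ`. -/
structure StarSetup (x0 : ℝ) (A : Finset Pt) where
  aStar : Pt
  lbl : ℕ → Pt
  t : ℕ
  aStar_mem : aStar ∈ A
  aStar_interior : aStar ∈ interior (convexHull ℝ (↑A : Set Pt))
  aStar_rightmost : ∀ p ∈ A, p ∈ interior (convexHull ℝ (↑A : Set Pt)) → p.1 ≤ aStar.1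
  lbl_mem : ∀ k, lbl k ∈ A.erase aStar
  lbl_periodic : ∀ k, lbl (k + (A.card - 1)) = lbl k
  lbl_bij : ∀ p ∈ A.erase aStar, ∃! k, k ∈ Finset.Icc 1 (A.card - 1) ∧ lbl k = p
  consec : ∀ k ∈ Finset.Icc 1 (A.card - 1),
    (↑A : Set Pt) ∩ Wedge aStar (lbl (k - 1)) (lbl k) ⊆ {aStar, lbl (k - 1), lbl k}
  t_pos : 1 ≤ t
  t_le : t ≤ A.card - 1
  inter_iff : ∀ k ∈ Finset.Icc 1 (A.card - 1),
    ((Wedge aStar (lbl (k - 1)) (lbl k)) ∩ {p : Pt | p.1 = x0}).Nonempty ↔ k ≤ t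
  ordered : ∀ k ∈ Finset.Icc 1 t, ∀ k' ∈ Finset.Icc 1 t, k < k' →
    ∀ p ∈ (Wedge aStar (lbl (k - 1)) (lbl k)) ∩ {q : Pt | q.1 = x0},
    ∀ p' ∈ (Wedge aStar (lbl (k' - 1)) (lbl k')) ∩ {q : Pt | q.1 = x0},
      p'.2 ≤ p.2

/-- The `k`-th `a*`-wedge `W_k`. -/
def StarSetup.W {x0 : ℝ} {A : Finset Pt} (S : StarSetup x0 A) (k : ℕ) : Set Pt :=
  Wedge S.aStar (S.lbl (k - 1)) (S.lbl k)

/-- `w_k`, the number of points of `B` in the `k`-th `a*`-wedge. -/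
def StarSetup.w {x0 : ℝ} {A : Finset Pt} (S : StarSetup x0 A) (B : Finset Pt) (k : ℕ) : ℕ :=
  Set.ncard ((↑B : Set Pt) ∩ S.W k)

/-!
Suppose that there is no divided 5-hole. In clockwise order around `a*`, the points in the wedges
`W_i` and `W_{i+1}` are `f 1`, …, `f 7`, where `f 1`, `f 4`, `f 7` belong to `A` and the others to
`B`, and the sector they sweep out contains no further points. Five points of such an empty fan
with a suitable pattern of left turns ("cups") and right turns ("caps"), or the apex `a*` and four
points forming caps, span a divided 5-hole. So each failure of a pattern decides the turn of a
further triple.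

Cutting by convex sets makes `A ∪ B` minimal among the point sets that contain these eight points
and at least one more point of each of `A` and `B`. Up to reflection in the horizontal axis, an
additional point of `B` lies clockwise after `f 4`, so the fan extends by a point `f 8`, which is
then forced to lie in `B`. By minimality `f 8` is the only additional point of `B`, and all other
additional points lie to the left of the line from `f 1` to `f 8`. The first and the last additional
point of `A` around `a*` extend the fan at one end or the other, and either extension completes a
divided 5-hole.
-/

/-! ### Orientation -/

/-- The orientation determinant of three points: positive for a counterclockwise triple,
zero for a collinear one. -/
def orient (x y z : Pt) : ℝ := cross2 (y - x) (z - x)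

/-- The points `x`, `y`, `z` are met in counterclockwise order. In particular `Ccw a v u`
says that `v` follows `u` clockwise around `a`, by an angle less than `π`. -/
def Ccw (x y z : Pt) : Prop := 0 < orient x y z

section Orientation

variable {a b o s t u v w x y z : Pt} {S : Set Pt}

theorem orient_def (x y z : Pt) :
    orient x y z = (y.1 - x.1) * (z.2 - x.2) - (y.2 - x.2) * (z.1 - x.1) := rfl

theorem orient_rotate (x y z : Pt) : orient y z x = orient x y z := by
  simp only [orient_def]; ring

theorem orient_swap (x y z : Pt) : orient x z y = -orient x y z := by
  simp only [orient_def]; ring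

theorem orient_self_left (x y : Pt) : orient x x y = 0 := by
  simp only [orient_def]; ring

theorem orient_self_right (x y : Pt) : orient x y y = 0 := by
  simp only [orient_def]; ring

theorem orient_self_outer (x y : Pt) : orient x y x = 0 := by
  simp only [orient_def]; ring

theorem orient_add_smul (u v x y : Pt) {b c : ℝ} (hbc : b + c = 1) :
    orient u v (b • x + c • y) = b * orient u v x + c * orient u v y := by
  obtain rfl : b = 1 - c := by linarith
  simp only [orient_def, Prod.fst_add, Prod.snd_add, Prod.smul_fst, Prod.smul_snd, smul_eq_mul]
  ring

theorem Ccw.rotate (h : Ccw x y z) : Ccw y z x := by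
  rwa [Ccw, orient_rotate]

theorem Ccw.orient_neg (h : Ccw x y z) : orient x z y < 0 := by
  rw [orient_swap]
  exact neg_neg_of_pos h

theorem Ccw.not_swap (h : Ccw x y z) : ¬ Ccw x z y :=
  h.orient_neg.not_gt

theorem ccw_swap_of_orient_neg (h : orient x y z < 0) : Ccw x z y := by
  rw [Ccw, orient_swap]
  exact neg_pos.2 h

theorem orient_neg_iff : orient x y z < 0 ↔ Ccw x z y :=
  ⟨ccw_swap_of_orient_neg, Ccw.orient_neg⟩

theorem Ccw.ne_left (h : Ccw x y z) : x ≠ y := by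
  rintro rfl
  exact h.ne' (orient_self_left x z)

theorem Ccw.ne_right (h : Ccw x y z) : y ≠ z := h.rotate.ne_left

theorem Ccw.ne_outer (h : Ccw x y z) : x ≠ z := h.rotate.rotate.ne_left.symm

theorem pos_of_mul_eq_add {b c d e r q : ℝ} (hr : 0 < r) (hb : 0 < b) (hc : 0 < c)
    (hd : 0 < d) (he : 0 < e) (h : r * q = b * c + d * e) : 0 < q :=
  (mul_pos_iff_of_pos_left hr).1 (h ▸ by positivity)

theorem Ccw.trans_of_cw (hus : Ccw a u s) (hvs : Ccw a v s) (hws : Ccw a w s)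
    (hvu : Ccw a v u) (hwv : Ccw a w v) : Ccw a w u :=
  pos_of_mul_eq_add hvs hwv hus hvu hws (by simp only [orient_def]; ring)

theorem Ccw.trans_of_ccw (hsu : Ccw a s u) (hsv : Ccw a s v) (hsw : Ccw a s w)
    (hvu : Ccw a v u) (hwv : Ccw a w v) : Ccw a w u :=
  pos_of_mul_eq_add hsv hwv hsu hvu hsw (by simp only [orient_def]; ring)

theorem Ccw.trans_of_fst_lt (hu : a.1 < u.1) (hv : a.1 < v.1) (hw : a.1 < w.1)
    (hvu : Ccw a v u) (hwv : Ccw a w v) : Ccw a w u :=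
  pos_of_mul_eq_add (sub_pos.2 hv) (sub_pos.2 hu) hwv (sub_pos.2 hw) hvu
    (by simp only [orient_def]; ring)

theorem Ccw.between (hwu : Ccw a w u) (hvu : Ccw a v u) (hxv : Ccw a x v) (hwx : Ccw a w x)
    (hwv : Ccw a w v) : Ccw a x u :=
  pos_of_mul_eq_add hwv hvu hwx hxv hwu (by simp only [orient_def]; ring)

theorem Ccw.between' (hwu : Ccw a w u) (hwv : Ccw a w v) (hvx : Ccw a v x) (hxu : Ccw a x u)
    (hvu : Ccw a v u) : Ccw a w x :=
  pos_of_mul_eq_add hvu hwu hvx hwv hxu (by simp only [orient_def]; ring)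

theorem Ccw.of_mem_triangle (hvs : Ccw a v s) (hst : Ccw a s t) (htv : Ccw a t v)
    (hs : Ccw u v s) (ht : Ccw u v t) : Ccw u v a := by
  have area : 0 < orient a v s + orient a s t + orient a t v := add_pos (add_pos hvs hst) htv
  exact pos_of_mul_eq_add area htv hs hvs ht (by simp only [orient_def]; ring)

theorem Ccw.of_surround (huv : Ccw a u v) (hvw : Ccw a v w) (hwu : Ccw a w u) : Ccw u v w := by
  have area : orient u v w = orient a u v + orient a v w + orient a w u := by
    simp only [orient_def]; ring
  rw [Ccw, area]
  exact add_pos (add_pos huv hvw) hwu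

theorem Ccw.of_ccw_of_ccw (htv : Ccw a t v) (hsv : Ccw a s v) (hs : Ccw t v s) (ha : Ccw a v u)
    (ht : Ccw t v u) : Ccw s v u :=
  pos_of_mul_eq_add htv hs ha hsv ht (by simp only [orient_def]; ring)

theorem Ccw.not_ccw_of_wrap (hwv : Ccw a w v) (hwu : Ccw a w u) (hxw : Ccw a x w)
    (hux : Ccw a u x) (h : Ccw u v w) : ¬ Ccw v w x := fun h' =>
  (Ccw.of_mem_triangle hwu hux hxw h.rotate h').not_swap hwv.rotate.rotate

theorem Ccw.of_lt_of_lt_of_lt {x0 : ℝ} (hvu : Ccw a v u) (hwv : Ccw a w v) (hwu : Ccw a w u)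
    (ha : a.1 < x0) (hu : x0 < u.1) (hv : v.1 < x0) (hw : x0 < w.1) : Ccw u v w := by
  have key : (x0 - a.1) * orient u v w = orient a w v * (u.1 - x0) + orient a v u * (w.1 - x0)
      + orient a w u * (x0 - v.1) := by simp only [orient_def]; ring
  refine (mul_pos_iff_of_pos_left (sub_pos.2 ha)).1 (key ▸ ?_)
  exact add_pos (add_pos (mul_pos hwv (sub_pos.2 hu)) (mul_pos hvu (sub_pos.2 hw)))
    (mul_pos hwu (sub_pos.2 hv))

theorem Ccw.of_gt_of_gt_of_gt {x0 : ℝ} (hvu : Ccw a v u) (hwv : Ccw a w v) (hwu : Ccw a w u)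
    (ha : a.1 < x0) (hu : u.1 < x0) (hv : x0 < v.1) (hw : w.1 < x0) : Ccw w v u := by
  have key : (x0 - a.1) * orient w v u = orient a w v * (x0 - u.1) + orient a v u * (x0 - w.1)
      + orient a w u * (v.1 - x0) := by simp only [orient_def]; ring
  refine (mul_pos_iff_of_pos_left (sub_pos.2 ha)).1 (key ▸ ?_)
  exact add_pos (add_pos (mul_pos hwv (sub_pos.2 hu)) (mul_pos hvu (sub_pos.2 hw)))
    (mul_pos hwu (sub_pos.2 hv))

theorem Ccw.fst_lt_of_between (hwu : Ccw a w u) (hvu : Ccw a v u) (hwv : Ccw a w v)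
    (hu : a.1 < u.1) (hw : a.1 < w.1) : a.1 < v.1 :=
  sub_pos.1 (pos_of_mul_eq_add hwu hvu (sub_pos.2 hw) hwv (sub_pos.2 hu)
    (by simp only [orient_def]; ring))

theorem Ccw.surround_left (huv : Ccw a u v) (hvw : Ccw a v w) (hwu : Ccw a w u)
    (hu : Ccw a u z) (hv : Ccw a v z) : Ccw a z w :=
  pos_of_mul_eq_add huv hwu hv hvw hu (by simp only [orient_def]; ring)

theorem Ccw.surround_right (huv : Ccw a u v) (hvw : Ccw a v w) (hwu : Ccw a w u)
    (hu : Ccw a z u) (hv : Ccw a z v) : Ccw a w z :=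
  pos_of_mul_eq_add huv hwu hv hvw hu (by simp only [orient_def]; ring)

theorem exists_forall_ne_imp_of_trans {α : Type*} {r : α → α → Prop} {S : Finset α}
    (hne : S.Nonempty)
    (total : ∀ x ∈ S, ∀ y ∈ S, x ≠ y → r x y ∨ r y x)
    (trans : ∀ x ∈ S, ∀ y ∈ S, ∀ z ∈ S, r x y → r y z → r x z) :
    ∃ s ∈ S, ∀ x ∈ S, x ≠ s → r s x := by
  induction hne using Finset.Nonempty.cons_induction with
  | singleton x => simp
  | cons y S hy _ ih =>
    simp only [Finset.forall_mem_cons] at total trans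
    obtain ⟨s, hs, hmin⟩ := ih (fun x hx => (total.2 x hx).2)
      fun x hx z hz w hw => ((trans.2 x hx).2 z hz).2 w hw
    rcases (total.1.2 s hs) (ne_of_mem_of_not_mem hs hy).symm with h | h
    · refine ⟨y, Finset.mem_cons_self y S, fun x hx hxy => ?_⟩
      have hxS := (Finset.mem_cons.1 hx).resolve_left hxy
      by_cases hxs : x = s
      · rwa [hxs]
      · exact (trans.1.2 s hs).2 x hxS h (hmin x hxS hxs)
    · refine ⟨s, Finset.mem_cons_of_mem hs, fun x hx hxs => ?_⟩
      rcases Finset.mem_cons.1 hx with rfl | hxS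
      exacts [h, hmin x hxS hxs]

theorem exists_first_cw_of_halfPlane {S : Finset Pt} (hne : S.Nonempty)
    (half : ∀ x ∈ S, Ccw o x b)
    (gen : ∀ x ∈ S, ∀ y ∈ S, x ≠ y → Ccw o x y ∨ Ccw o y x) :
    ∃ s ∈ S, ∀ x ∈ S, x ≠ s → Ccw o x s :=
  exists_forall_ne_imp_of_trans hne (fun x hx y hy hxy => (gen x hx y hy hxy).symm)
    fun x hx y hy z hz => .trans_of_cw (half x hx) (half y hy) (half z hz)

theorem exists_first_ccw_of_halfPlane {S : Finset Pt} (hne : S.Nonempty)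
    (half : ∀ x ∈ S, Ccw o b x)
    (gen : ∀ x ∈ S, ∀ y ∈ S, x ≠ y → Ccw o x y ∨ Ccw o y x) :
    ∃ s ∈ S, ∀ x ∈ S, x ≠ s → Ccw o s x :=
  exists_forall_ne_imp_of_trans hne gen
    fun x hx y hy z hz hxy hyz => .trans_of_ccw (half z hz) (half y hy) (half x hx) hyz hxy

theorem convex_setOf_orient_nonneg (u v : Pt) : Convex ℝ {z | 0 ≤ orient u v z} := by
  intro x hx y hy b c hb hc hbc
  rw [Set.mem_ofPred_eq, orient_add_smul u v x y hbc]
  exact add_nonneg (mul_nonneg hb hx) (mul_nonneg hc hy)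

theorem convex_insert_setOf_orient_pos (u v : Pt) : Convex ℝ (insert u {z | Ccw u v z}) := by
  refine convex_iff_forall_pos.2 fun x hx y hy b c hb hc hbc => ?_
  have combo := orient_add_smul u v x y hbc
  rcases hx with rfl | hx <;> rcases hy with rfl | hy
  · exact .inl (Convex.combo_self hbc _)
  all_goals refine .inr ?_
  · rw [orient_self_outer, mul_zero, zero_add] at combo
    exact (mul_pos hc hy).trans_eq combo.symm
  · rw [orient_self_outer, mul_zero, add_zero] at combo
    exact (mul_pos hb hx).trans_eq combo.symm
  · exact (add_pos (mul_pos hb hx) (mul_pos hc hy)).trans_eq combo.symm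

theorem orient_nonneg_of_mem_convexHull {S : Set Pt} (h : ∀ x ∈ S, 0 ≤ orient u v x)
    (hz : z ∈ convexHull ℝ S) : 0 ≤ orient u v z :=
  convexHull_min h (convex_setOf_orient_nonneg u v) hz

theorem collinear_of_orient_eq_zero (h : orient x y z = 0) : Collinear ℝ {x, y, z} := by
  rcases eq_or_ne x y with rfl | hxy
  · rw [Set.insert_eq_of_mem (Set.mem_insert x {z})]
    exact collinear_pair ℝ x z
  have hne : (y.1 - x.1) ^ 2 + (y.2 - x.2) ^ 2 ≠ 0 := fun h => hxy <| by
    obtain ⟨h₁, h₂⟩ := (add_eq_zero_iff_of_nonneg (sq_nonneg _) (sq_nonneg _)).1 h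
    exact Prod.ext (sub_eq_zero.1 (sq_eq_zero_iff.1 h₁)).symm
      (sub_eq_zero.1 (sq_eq_zero_iff.1 h₂)).symm
  rw [orient_def] at h
  refine (collinear_iff_of_mem (Set.mem_insert x _)).2 ⟨y - x, ?_⟩
  rintro w (rfl | rfl | hw)
  · exact ⟨0, by simp⟩
  · exact ⟨1, by simp⟩
  obtain rfl : w = z := hw
  -- the orthogonal projection of `w - x` to the line spanned by `y - x`
  refine ⟨((y.1 - x.1) * (w.1 - x.1) + (y.2 - x.2) * (w.2 - x.2)) /
    ((y.1 - x.1) ^ 2 + (y.2 - x.2) ^ 2), Prod.ext ?_ ?_⟩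
  · simp only [vadd_eq_add, Prod.fst_add, Prod.smul_fst, Prod.fst_sub, smul_eq_mul]
    field_simp
    linear_combination -(y.2 - x.2) * h
  · simp only [vadd_eq_add, Prod.snd_add, Prod.smul_snd, Prod.snd_sub, smul_eq_mul]
    field_simp
    linear_combination (y.1 - x.1) * h

theorem orient_ne_zero_of_genPos (gen : GenPos S) (hx : x ∈ S) (hy : y ∈ S) (hz : z ∈ S)
    (hxy : x ≠ y) (hxz : x ≠ z) (hyz : y ≠ z) : orient x y z ≠ 0 :=
  fun h => gen x hx y hy z hz hxy hxz hyz (collinear_of_orient_eq_zero h)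

theorem continuous_orient (u v : Pt) : Continuous (orient u v) := by
  simp only [funext fun z => orient_def u v z]
  fun_prop

theorem exists_ccw_of_mem_interior_convexHull (ha : a ∈ interior (convexHull ℝ S)) (hva : v ≠ a) :
    ∃ x ∈ S, Ccw a x v := by
  by_contra! h
  have nonneg (z : Pt) (hz : z ∈ convexHull ℝ S) : 0 ≤ orient a v z :=
    orient_nonneg_of_mem_convexHull
      (fun x hx => not_lt.1 fun hneg => h x hx (ccw_swap_of_orient_neg hneg)) hz
  let γ : ℝ → Pt := fun d => (a.1 + d * (v.2 - a.2), a.2 - d * (v.1 - a.1))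
  have orient_γ (d : ℝ) : orient a v (γ d) = -d * ((v.1 - a.1) ^ 2 + (v.2 - a.2) ^ 2) := by
    simp only [orient_def, γ]; ring
  have γ_near : ∀ᶠ d in nhdsWithin (0 : ℝ) (Set.Ioi 0), γ d ∈ interior (convexHull ℝ S) := by
    have γ_cont : Continuous γ := by fun_prop
    exact nhdsWithin_le_nhds (γ_cont.continuousAt.preimage_mem_nhds
      (isOpen_interior.mem_nhds (by simpa [γ] using ha)))
  obtain ⟨d, hd, hd_pos⟩ := (γ_near.and self_mem_nhdsWithin).exists
  have norm_nonpos : (v.1 - a.1) ^ 2 + (v.2 - a.2) ^ 2 ≤ 0 := by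
    have := nonneg _ (interior_subset hd)
    rw [orient_γ, neg_mul] at this
    exact nonpos_of_mul_nonpos_right (neg_nonneg.1 this) hd_pos
  obtain ⟨h₁, h₂⟩ := (add_eq_zero_iff_of_nonneg (sq_nonneg _) (sq_nonneg _)).1
    (norm_nonpos.antisymm (by positivity))
  exact hva (Prod.ext (sub_eq_zero.1 (sq_eq_zero_iff.1 h₁)) (sub_eq_zero.1 (sq_eq_zero_iff.1 h₂)))

theorem mem_convexHull_of_ccw (hu : u ∈ S) (hv : v ∈ S) (hw : w ∈ S) (huv : Ccw x u v)
    (hvw : Ccw x v w) (hwu : Ccw x w u) : x ∈ convexHull ℝ S := by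
  have area : orient u v w = orient x v w + orient x w u + orient x u v := by
    simp only [orient_def]; ring
  have huvw : 0 < orient u v w := Ccw.of_surround huv hvw hwu
  have combo := (convex_convexHull ℝ S).sum_mem (t := Finset.univ)
    (w := ![orient x v w / orient u v w, orient x w u / orient u v w, orient x u v / orient u v w])
    (z := ![u, v, w]) ?_ ?_ ?_
  · convert combo
    simp only [Fin.sum_univ_three, Matrix.cons_val_zero, Matrix.cons_val_one, Matrix.cons_val]
    ext
    · simp only [Prod.fst_add, Prod.smul_fst, smul_eq_mul]
      field_simp
      simp only [orient_def]; ring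
    · simp only [Prod.snd_add, Prod.smul_snd, smul_eq_mul]
      field_simp
      simp only [orient_def]; ring
  · intro i _
    fin_cases i
    exacts [(div_pos hvw huvw).le, (div_pos hwu huvw).le, (div_pos huv huvw).le]
  · simp only [Fin.sum_univ_three, Matrix.cons_val_zero, Matrix.cons_val_one, Matrix.cons_val]
    rw [← add_div, ← add_div, ← area, div_self huvw.ne']
  · intro i _
    fin_cases i
    exacts [subset_convexHull ℝ S hu, subset_convexHull ℝ S hv, subset_convexHull ℝ S hw]

theorem mem_interior_convexHull_of_ccw (hu : u ∈ S) (hv : v ∈ S) (hw : w ∈ S) (huv : Ccw x u v)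
    (hvw : Ccw x v w) (hwu : Ccw x w u) : x ∈ interior (convexHull ℝ S) := by
  have isOpen_ccw (p q : Pt) : IsOpen {y | Ccw y p q} := by
    have : {y | Ccw y p q} = {y | 0 < orient p q y} :=
      Set.ext fun y => by rw [Set.mem_ofPred_eq, Ccw, ← orient_rotate]; rfl
    exact this ▸ isOpen_lt continuous_const (continuous_orient p q)
  exact mem_interior.2 ⟨{y | Ccw y u v} ∩ ({y | Ccw y v w} ∩ {y | Ccw y w u}),
    fun y hy => mem_convexHull_of_ccw hu hv hw hy.1 hy.2.1 hy.2.2,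
    (isOpen_ccw u v).inter ((isOpen_ccw v w).inter (isOpen_ccw w u)), huv, hvw, hwu⟩

end Orientation

/-! ### Convex pentagons -/

section Pentagon

variable {a u v w x x₀ x₁ x₂ x₃ x₄ z : Pt}

theorem Ccw.chain_left (huv : Ccw a u v) (hvw : Ccw a v w) (hvx : Ccw a v x)
    (h : Ccw u v w) (h' : Ccw v w x) : Ccw u v x :=
  pos_of_mul_eq_add hvw huv h' hvx h (by simp only [orient_def]; ring)

theorem Ccw.chain_right (huw : Ccw a u w) (hvw : Ccw a v w) (hwx : Ccw a w x)
    (h : Ccw u v w) (h' : Ccw v w x) : Ccw u w x :=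
  pos_of_mul_eq_add hvw huw h' hwx h (by simp only [orient_def]; ring)

/-- The points `x₀`, …, `x₄` are, in counterclockwise order, the vertices of a convex pentagon;
encoded by the orientations of all ten triples. -/
structure ConvexPentagon (x₀ x₁ x₂ x₃ x₄ : Pt) : Prop where
  ccw₀₁₂ : Ccw x₀ x₁ x₂
  ccw₀₁₃ : Ccw x₀ x₁ x₃
  ccw₀₁₄ : Ccw x₀ x₁ x₄
  ccw₀₂₃ : Ccw x₀ x₂ x₃
  ccw₀₂₄ : Ccw x₀ x₂ x₄
  ccw₀₃₄ : Ccw x₀ x₃ x₄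
  ccw₁₂₃ : Ccw x₁ x₂ x₃
  ccw₁₂₄ : Ccw x₁ x₂ x₄
  ccw₁₃₄ : Ccw x₁ x₃ x₄
  ccw₂₃₄ : Ccw x₂ x₃ x₄

namespace ConvexPentagon

theorem of_star (h₀₁₂ : Ccw x₀ x₁ x₂) (h₀₁₃ : Ccw x₀ x₁ x₃) (h₀₁₄ : Ccw x₀ x₁ x₄)
    (h₀₂₃ : Ccw x₀ x₂ x₃) (h₀₂₄ : Ccw x₀ x₂ x₄) (h₀₃₄ : Ccw x₀ x₃ x₄)
    (h₁₂₃ : Ccw x₁ x₂ x₃) (h₂₃₄ : Ccw x₂ x₃ x₄) : ConvexPentagon x₀ x₁ x₂ x₃ x₄ :=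
  ⟨h₀₁₂, h₀₁₃, h₀₁₄, h₀₂₃, h₀₂₄, h₀₃₄, h₁₂₃, .chain_left h₀₁₂ h₀₂₃ h₀₂₄ h₁₂₃ h₂₃₄,
    .chain_right h₀₁₃ h₀₂₃ h₀₃₄ h₁₂₃ h₂₃₄, h₂₃₄⟩

theorem rotate (h : ConvexPentagon x₀ x₁ x₂ x₃ x₄) : ConvexPentagon x₁ x₂ x₃ x₄ x₀ :=
  ⟨h.ccw₁₂₃, h.ccw₁₂₄, h.ccw₀₁₂.rotate, h.ccw₁₃₄, h.ccw₀₁₃.rotate, h.ccw₀₁₄.rotate, h.ccw₂₃₄,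
    h.ccw₀₂₃.rotate, h.ccw₀₂₄.rotate, h.ccw₀₃₄.rotate⟩

theorem notMem_convexHull (h : ConvexPentagon x₀ x₁ x₂ x₃ x₄) :
    x₀ ∉ convexHull ℝ {x₁, x₂, x₃, x₄} := by
  refine fun hx => h.ccw₀₁₄.rotate.rotate.orient_neg.not_ge
    (orient_nonneg_of_mem_convexHull ?_ hx)
  rintro _ (rfl | rfl | rfl | rfl)
  exacts [(orient_self_right _ _).ge, h.ccw₁₂₄.rotate.rotate.le, h.ccw₁₃₄.rotate.rotate.le,
    (orient_self_outer _ _).ge]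

theorem convexPos (h : ConvexPentagon x₀ x₁ x₂ x₃ x₄) :
    ConvexPos {x₀, x₁, x₂, x₃, x₄} := by
  have omit_vertex {S T : Set Pt} {x : Pt} (hx : x ∉ convexHull ℝ T) (hS : S ⊆ insert x T) :
      x ∉ convexHull ℝ (S \ {x}) :=
    fun hxS => hx (convexHull_mono (Set.sdiff_singleton_subset_iff.2 hS) hxS)
  rintro _ (rfl | rfl | rfl | rfl | rfl)
  · exact omit_vertex h.notMem_convexHull (by grind)
  · exact omit_vertex h.rotate.notMem_convexHull (by grind)
  · exact omit_vertex h.rotate.rotate.notMem_convexHull (by grind)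
  · exact omit_vertex h.rotate.rotate.rotate.notMem_convexHull (by grind)
  · exact omit_vertex h.rotate.rotate.rotate.rotate.notMem_convexHull (by grind)

theorem orient_edge_nonneg (h : ConvexPentagon x₀ x₁ x₂ x₃ x₄)
    (hz : z ∈ convexHull ℝ {x₀, x₁, x₂, x₃, x₄}) : 0 ≤ orient x₀ x₁ z := by
  refine orient_nonneg_of_mem_convexHull ?_ hz
  rintro _ (rfl | rfl | rfl | rfl | rfl)
  exacts [(orient_self_outer _ _).ge, (orient_self_right _ _).ge, h.ccw₀₁₂.le, h.ccw₀₁₃.le,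
    h.ccw₀₁₄.le]

theorem orient_edges_nonneg (h : ConvexPentagon x₀ x₁ x₂ x₃ x₄)
    (hz : z ∈ convexHull ℝ {x₀, x₁, x₂, x₃, x₄}) :
    0 ≤ orient x₀ x₁ z ∧ 0 ≤ orient x₁ x₂ z ∧ 0 ≤ orient x₂ x₃ z ∧ 0 ≤ orient x₃ x₄ z ∧
      0 ≤ orient x₄ x₀ z := by
  have h₁ := h.rotate
  have h₂ := h₁.rotate
  have h₃ := h₂.rotate
  have h₄ := h₃.rotate
  refine ⟨h.orient_edge_nonneg hz, h₁.orient_edge_nonneg ?_, h₂.orient_edge_nonneg ?_,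
    h₃.orient_edge_nonneg ?_, h₄.orient_edge_nonneg ?_⟩ <;> convert hz using 2 <;> grind

theorem card_vertices (h : ConvexPentagon x₀ x₁ x₂ x₃ x₄) :
    ({x₀, x₁, x₂, x₃, x₄} : Finset Pt).card = 5 := by
  simp [h.ccw₀₁₂.ne_left, h.ccw₀₁₂.ne_outer, h.ccw₀₁₃.ne_outer, h.ccw₀₁₄.ne_outer,
    h.ccw₁₂₃.ne_left, h.ccw₁₂₃.ne_outer, h.ccw₁₂₄.ne_outer, h.ccw₂₃₄.ne_left, h.ccw₂₃₄.ne_outer,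
    h.ccw₂₃₄.ne_right]

theorem exists_dividedFiveHole {A B : Finset Pt} (h : ConvexPentagon x₀ x₁ x₂ x₃ x₄)
    (subset : {x₀, x₁, x₂, x₃, x₄} ⊆ A ∪ B)
    (hA : u ∈ A) (hu : u ∈ ({x₀, x₁, x₂, x₃, x₄} : Finset Pt))
    (hB : v ∈ B) (hv : v ∈ ({x₀, x₁, x₂, x₃, x₄} : Finset Pt))
    (empty : ∀ z ∈ A ∪ B, z ∈ convexHull ℝ {x₀, x₁, x₂, x₃, x₄} →
      z ∈ ({x₀, x₁, x₂, x₃, x₄} : Finset Pt)) :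
    ∃ H, DividedFiveHole A B H :=
  ⟨{x₀, x₁, x₂, x₃, x₄}, ⟨subset, h.card_vertices, by simpa using h.convexPos,
    fun z hz hzH hzHull => hzH (empty z hz (by simpa using hzHull))⟩, ⟨u, hu, hA⟩, ⟨v, hv, hB⟩⟩

end ConvexPentagon

end Pentagon

/-! ### Fans, cups and caps -/

section Fan

variable {a u v w x y z : Pt} {f : ℕ → Pt} {i j k l m n s t : ℕ}

/-- The closed convex cone with apex `a` swept clockwise from the ray through `u` to the ray
through `v`, for `v` following `u` clockwise by an angle less than `π`. -/
def cone (a u v : Pt) : Set Pt := {z | 0 ≤ orient a z u ∧ 0 ≤ orient a v z}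

theorem convex_cone (a u v : Pt) : Convex ℝ (cone a u v) := by
  have h : cone a u v = {z | 0 ≤ orient u a z} ∩ {z | 0 ≤ orient a v z} := by
    simp only [← orient_rotate u a]
    rfl
  exact h ▸ (convex_setOf_orient_nonneg u a).inter (convex_setOf_orient_nonneg a v)

theorem notMem_cone : z ∉ cone a u v ↔ Ccw a u z ∨ Ccw a z v := by
  simp only [cone, Set.mem_ofPred_eq, not_and_or, not_le, orient_neg_iff]

theorem mem_cone_or_mem_cone (w : Pt) (h : z ∈ cone a u v) : z ∈ cone a u w ∨ z ∈ cone a w v := by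
  rcases le_total 0 (orient a w z) with hw | hw
  · exact .inl ⟨h.1, hw⟩
  · exact .inr ⟨by rw [orient_swap]; exact neg_nonneg.2 hw, h.2⟩

theorem cone_subset_cone_right (hvu : Ccw a v u) (hwv : Ccw a w v) (hwu : Ccw a w u) :
    cone a u v ⊆ cone a u w := fun z hz => by
  have key : orient a v u * orient a w z = orient a w v * orient a z u
      + orient a w u * orient a v z := by simp only [orient_def]; ring
  exact ⟨hz.1, nonneg_of_mul_nonneg_right
    (key ▸ add_nonneg (mul_nonneg hwv.le hz.1) (mul_nonneg hwu.le hz.2)) hvu⟩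

theorem cone_subset_cone_left (hvu : Ccw a v u) (hwv : Ccw a w v) (hwu : Ccw a w u) :
    cone a v w ⊆ cone a u w := fun z hz => by
  have key : orient a w v * orient a z u = orient a w u * orient a z v
      + orient a v u * orient a w z := by simp only [orient_def]; ring
  exact ⟨nonneg_of_mul_nonneg_right
    (key ▸ add_nonneg (mul_nonneg hwu.le hz.1) (mul_nonneg hvu.le hz.2)) hwv, hz.2⟩

theorem fst_le_of_mem_cone (h : Ccw a v u) (hu : u.1 ≤ a.1) (hv : v.1 ≤ a.1) (hz : z ∈ cone a u v) :
    z.1 ≤ a.1 := by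
  have key : orient a v u * (a.1 - z.1) = orient a z u * (a.1 - v.1)
      + orient a v z * (a.1 - u.1) := by simp only [orient_def]; ring
  exact sub_nonneg.1 (nonneg_of_mul_nonneg_right (key ▸ add_nonneg
    (mul_nonneg hz.1 (sub_nonneg.2 hv)) (mul_nonneg hz.2 (sub_nonneg.2 hu))) h)

theorem mem_cone_of_le_snd (hu : u.1 ≤ a.1) (hv : a.1 ≤ v.1) (hz : z ∈ cone a u v)
    (hwz : w.1 = z.1) (hzw : z.2 ≤ w.2) : w ∈ cone a u v := by
  obtain ⟨hzu, hvz⟩ := hz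
  rw [orient_def] at hzu hvz
  have hu' := mul_nonneg (sub_nonneg.2 hzw) (sub_nonneg.2 hu)
  have hv' := mul_nonneg (sub_nonneg.2 hzw) (sub_nonneg.2 hv)
  constructor <;> rw [orient_def, hwz] <;> linarith

/-- The points `f m`, …, `f n` occur in clockwise order around `a`, within an angle less
than `π`. -/
def IsFan (a : Pt) (f : ℕ → Pt) (m n : ℕ) : Prop :=
  ∀ ⦃i j⦄, m ≤ i → i < j → j ≤ n → Ccw a (f j) (f i)

/-- The path `f i`, `f j`, `f k` turns left. If its points occur in clockwise order around `a`,
then `f j` lies on the same side of the line through `f i` and `f k` as `a`. -/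
abbrev Cup (f : ℕ → Pt) (i j k : ℕ) : Prop := Ccw (f i) (f j) (f k)

/-- The path `f i`, `f j`, `f k` turns right, so that `f j` lies beyond the line through `f i` and
`f k` as seen from `a` if the points occur in clockwise order around `a`. -/
abbrev Cap (f : ℕ → Pt) (i j k : ℕ) : Prop := Ccw (f k) (f j) (f i)

theorem Cup.not_cap (h : Cup f i j k) : ¬ Cap f i j k :=
  fun h' => h.not_swap h'.rotate.rotate

namespace IsFan

theorem of_succ (hright : ∀ i, m ≤ i → i ≤ n → a.1 < (f i).1)
    (hsucc : ∀ i, m ≤ i → i < n → Ccw a (f (i + 1)) (f i)) : IsFan a f m n := by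
  intro i j hmi hij
  induction j, hij using Nat.le_induction with
  | base => exact hsucc i hmi
  | succ j hij ih =>
    exact fun hjn => (ih (by lia)).trans_of_fst_lt (hright i hmi (by lia))
      (hright j (by lia) (by lia)) (hright _ (by lia) hjn) (hsucc j (by lia) hjn)

theorem mono (h : IsFan a f m n) (hm : m ≤ s) (hn : t ≤ n) : IsFan a f s t :=
  fun _ _ hsi hij hjt => h (hm.trans hsi) hij (hjt.trans hn)

theorem ccw (hf : IsFan a f m n) (h : m ≤ i ∧ i < j ∧ j ≤ n := by decide) :
    Ccw a (f j) (f i) :=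
  hf h.1 h.2.1 h.2.2

theorem cons (hf : IsFan a f (m + 1) n) (hfst : Ccw a (f (m + 1)) (f m))
    (hlst : Ccw a (f n) (f m)) : IsFan a f m n := by
  intro i j hmi hij hjn
  rcases hmi.eq_or_lt with rfl | hmi
  · rcases hjn.eq_or_lt with rfl | hjn
    · exact hlst
    rcases (Nat.succ_le_of_lt hij).eq_or_lt with rfl | hij
    · exact hfst
    exact .between hlst hfst (hf.ccw (by lia)) (hf.ccw (by lia)) (hf.ccw (by lia))
  · exact hf hmi hij hjn

theorem snoc (hf : IsFan a f m n) (hlst : Ccw a (f (n + 1)) (f n))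
    (hfst : Ccw a (f (n + 1)) (f m)) : IsFan a f m (n + 1) := by
  intro i j hmi hij hjn
  rcases hjn.eq_or_lt with rfl | hjn
  · rcases hmi.eq_or_lt with rfl | hmi
    · exact hfst
    rcases (Nat.le_of_lt_succ hij).eq_or_lt with rfl | hij
    · exact hlst
    exact .between' hfst hlst (hf.ccw (by lia)) (hf.ccw (by lia)) (hf.ccw (by lia))
  · exact hf hmi hij (by lia)

theorem mem_cone (hf : IsFan a f m n) (hmi : m ≤ i) (hin : i ≤ n) : f i ∈ cone a (f m) (f n) := by
  constructor
  · rcases hmi.eq_or_lt with rfl | hmi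
    exacts [(orient_self_right _ _).ge, (hf le_rfl hmi hin).le]
  · rcases hin.eq_or_lt with rfl | hin
    exacts [(orient_self_right _ _).ge, (hf hmi hin le_rfl).le]

theorem cone_subset {m n i j : ℕ} (F : IsFan a f m n) (hmi : m ≤ i) (hij : i < j)
    (hjn : j ≤ n) : cone a (f i) (f j) ⊆ cone a (f m) (f n) := by
  have hright : cone a (f i) (f j) ⊆ cone a (f i) (f n) := by
    rcases hjn.eq_or_lt with rfl | hjn
    exacts [subset_rfl, cone_subset_cone_right (F.ccw (by lia)) (F.ccw (by lia)) (F.ccw (by lia))]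
  have hleft : cone a (f i) (f n) ⊆ cone a (f m) (f n) := by
    rcases hmi.eq_or_lt with rfl | hmi
    exacts [subset_rfl, cone_subset_cone_left (F.ccw (by lia)) (F.ccw (by lia)) (F.ccw (by lia))]
  exact hright.trans hleft

theorem cup_trans (hf : IsFan a f m n) (h : Cup f i j k) (h' : Cup f j k l)
    (hi : m ≤ i ∧ i < j ∧ j < k ∧ k < l ∧ l ≤ n := by decide) : Cup f i j l ∧ Cup f i k l := by
  have hjk : Ccw a (f k) (f j) := hf.ccw (by lia)
  constructor
  · exact pos_of_mul_eq_add hjk (hf.ccw (i := i) (j := j) (by lia)) h'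
      (hf.ccw (i := j) (j := l) (by lia)) h (by simp only [orient_def]; ring)
  · exact pos_of_mul_eq_add hjk (hf.ccw (i := i) (j := k) (by lia)) h'
      (hf.ccw (i := k) (j := l) (by lia)) h (by simp only [orient_def]; ring)

theorem cap_trans (hf : IsFan a f m n) (h : Cap f i j k) (h' : Cap f j k l)
    (hi : m ≤ i ∧ i < j ∧ j < k ∧ k < l ∧ l ≤ n := by decide) : Cap f i j l ∧ Cap f i k l :=
  ⟨.chain_right (hf.ccw (by lia)) (hf.ccw (by lia)) (hf.ccw (by lia)) h' h,
    .chain_left (hf.ccw (by lia)) (hf.ccw (by lia)) (hf.ccw (by lia)) h' h⟩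

theorem cup_cross (hf : IsFan a f m n) (h : Cup f i j l) (h' : Cap f i k l)
    (hi : m ≤ i ∧ i < j ∧ j < k ∧ k < l ∧ l ≤ n := by decide) : Cup f i j k ∧ Cap f j k l := by
  have hil : Ccw a (f l) (f i) := hf.ccw (by lia)
  constructor
  · exact pos_of_mul_eq_add hil (hf.ccw (i := i) (j := k) (by lia)) h
      (hf.ccw (i := i) (j := j) (by lia)) h' (by simp only [orient_def]; ring)
  · exact pos_of_mul_eq_add hil (hf.ccw (i := j) (j := l) (by lia)) h'
      (hf.ccw (i := k) (j := l) (by lia)) h (by simp only [orient_def]; ring)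

theorem cap_cross (hf : IsFan a f m n) (h : Cap f i j l) (h' : Cup f i k l)
    (hi : m ≤ i ∧ i < j ∧ j < k ∧ k < l ∧ l ≤ n := by decide) : Cap f i j k ∧ Cup f j k l := by
  have hil : Ccw a (f l) (f i) := hf.ccw (by lia)
  constructor
  · exact pos_of_mul_eq_add hil (hf.ccw (i := i) (j := k) (by lia)) h
      (hf.ccw (i := i) (j := j) (by lia)) h' (by simp only [orient_def]; ring)
  · exact pos_of_mul_eq_add hil (hf.ccw (i := j) (j := l) (by lia)) h'
      (hf.ccw (i := k) (j := l) (by lia)) h (by simp only [orient_def]; ring)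

theorem convexPentagon_of_cups (hf : IsFan a f m n) (h₁ : Cup f i j k) (h₂ : Cup f j k l)
    (h₃ : Cup f k l s) (hi : m ≤ i ∧ i < j ∧ j < k ∧ k < l ∧ l < s ∧ s ≤ n := by decide) :
    ConvexPentagon (f i) (f j) (f k) (f l) (f s) := by
  obtain ⟨hijl, hikl⟩ := hf.cup_trans h₁ h₂ (by lia)
  obtain ⟨hjks, -⟩ := hf.cup_trans h₂ h₃ (by lia)
  obtain ⟨hijs, hiks⟩ := hf.cup_trans h₁ hjks (by lia)
  obtain ⟨-, hils⟩ := hf.cup_trans hikl h₃ (by lia)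
  exact .of_star h₁ hijl hijs hikl hiks hils h₂ h₃

theorem convexPentagon_cap_snd (hf : IsFan a f m n) (hijs : Cap f i j s) (hikl : Cup f i k l)
    (hkls : Cup f k l s) (hi : m ≤ i ∧ i < j ∧ j < k ∧ k < l ∧ l < s ∧ s ≤ n := by decide) :
    ConvexPentagon (f i) (f k) (f l) (f s) (f j) := by
  obtain ⟨hiks, hils⟩ := hf.cup_trans hikl hkls (by lia)
  obtain ⟨hijk, -⟩ := hf.cap_cross hijs hiks (by lia)
  obtain ⟨hijl, hjls⟩ := hf.cap_cross hijs hils (by lia)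
  exact .of_star hikl hiks hijk.rotate.rotate hils hijl.rotate.rotate hijs.rotate.rotate hkls
    hjls.rotate

theorem convexPentagon_cap_trd (hf : IsFan a f m n) (hiks : Cap f i k s) (hijl : Cup f i j l)
    (hjls : Cup f j l s) (hi : m ≤ i ∧ i < j ∧ j < k ∧ k < l ∧ l < s ∧ s ≤ n := by decide) :
    ConvexPentagon (f i) (f j) (f l) (f s) (f k) := by
  obtain ⟨hijs, hils⟩ := hf.cup_trans hijl hjls (by lia)
  obtain ⟨hijk, -⟩ := hf.cup_cross hijs hiks (by lia)
  obtain ⟨hikl, hkls⟩ := hf.cap_cross hiks hils (by lia)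
  exact .of_star hijl hijs hijk hils hikl.rotate.rotate hiks.rotate.rotate hjls hkls.rotate

theorem convexPentagon_cap_fth (hf : IsFan a f m n) (hils : Cap f i l s) (hijk : Cup f i j k)
    (hjks : Cup f j k s) (hi : m ≤ i ∧ i < j ∧ j < k ∧ k < l ∧ l < s ∧ s ≤ n := by decide) :
    ConvexPentagon (f i) (f j) (f k) (f s) (f l) := by
  obtain ⟨hijs, hiks⟩ := hf.cup_trans hijk hjks (by lia)
  obtain ⟨hijl, -⟩ := hf.cup_cross hijs hils (by lia)
  obtain ⟨hikl, hkls⟩ := hf.cup_cross hiks hils (by lia)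
  exact .of_star hijk hijs hijl hiks hikl hils.rotate.rotate hjks hkls.rotate.rotate

theorem convexPentagon_caps (hf : IsFan a f m n) (hijl : Cap f i j l) (hjls : Cap f j l s)
    (hiks : Cup f i k s) (hi : m ≤ i ∧ i < j ∧ j < k ∧ k < l ∧ l < s ∧ s ≤ n := by decide) :
    ConvexPentagon (f i) (f k) (f s) (f l) (f j) := by
  obtain ⟨hijs, hils⟩ := hf.cap_trans hijl hjls (by lia)
  obtain ⟨hikl, hkls⟩ := hf.cup_cross hiks hils (by lia)
  obtain ⟨hijk, -⟩ := hf.cap_cross hijs hiks (by lia)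
  exact .of_star hiks hikl hijk.rotate.rotate hils.rotate.rotate hijs.rotate.rotate
    hijl.rotate.rotate hkls.rotate.rotate hjls

end IsFan

/-- The points `f m`, …, `f n` of `P` form a fan around `a ∈ P` whose cone contains no further
point of `P`. -/
structure ClearFan (P : Finset Pt) (a : Pt) (f : ℕ → Pt) (m n : ℕ) : Prop where
  apex_mem : a ∈ P
  mem : ∀ k, m ≤ k → k ≤ n → f k ∈ P
  fan : IsFan a f m n
  gap : ∀ k, m ≤ k → k < n → ∀ z ∈ P, z ∈ cone a (f k) (f (k + 1)) →
    z = a ∨ z = f k ∨ z = f (k + 1)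

theorem IsFan.clearFan {P : Finset Pt} {m n : ℕ} (F : IsFan a f m n) (apex_mem : a ∈ P)
    (mem : ∀ k, m ≤ k → k ≤ n → f k ∈ P)
    (h : ∀ z ∈ P, z ∈ cone a (f m) (f n) → z = a ∨ ∃ k, m ≤ k ∧ k ≤ n ∧ z = f k) :
    ClearFan P a f m n where
  apex_mem := apex_mem
  mem := mem
  fan := F
  gap k hmk hkn z hz hzc := by
    rcases h z hz (F.cone_subset hmk k.lt_succ_self hkn hzc) with h | ⟨j, hmj, hjn, rfl⟩
    · exact .inl h
    rcases lt_trichotomy j k with hjk | rfl | hkj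
    · exact absurd hzc (notMem_cone.2 (.inl (F.ccw (by lia))))
    · exact .inr (.inl rfl)
    rcases Nat.eq_or_lt_of_le hkj with rfl | hkj
    · exact .inr (.inr rfl)
    · exact absurd hzc (notMem_cone.2 (.inr (F.ccw (by lia))))

theorem clearFan_of_two {P : Finset Pt} (ha : a ∈ P) (hu : u ∈ P) (hx : x ∈ P) (hy : y ∈ P)
    (hv : v ∈ P) (hvu : Ccw a v u) (hxu : Ccw a x u) (hvx : Ccw a v x) (hyu : Ccw a y u)
    (hvy : Ccw a v y) (hyx : Ccw a y x)
    (h : ∀ z ∈ P, z ∈ cone a u v → z = a ∨ z = u ∨ z = x ∨ z = y ∨ z = v) :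
    ClearFan P a ([a, u, x, y, v].getD · a) 1 4 := by
  refine IsFan.clearFan (fun i j h1i hij hj4 => ?_) ha (fun k h1k hk4 => ?_) fun z hz hzc => ?_
  · interval_cases j <;> interval_cases i <;> assumption
  · interval_cases k <;> assumption
  · rcases h z hz hzc with h | h | h | h | h
    exacts [.inl h, .inr ⟨1, by simpa using h⟩, .inr ⟨2, by simpa using h⟩,
      .inr ⟨3, by simpa using h⟩, .inr ⟨4, by simpa using h⟩]

namespace ClearFan

variable {A B P : Finset Pt}

theorem eq_of_mem_cone (hf : ClearFan P a f m n) (hmi : m ≤ i) (hij : i < j) (hjn : j ≤ n)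
    (hz : z ∈ P) (h : z ∈ cone a (f i) (f j)) : z = a ∨ ∃ k, i ≤ k ∧ k ≤ j ∧ z = f k := by
  induction j, hij using Nat.le_induction with
  | base =>
    rcases hf.gap i hmi hjn z hz h with h | h | h
    exacts [.inl h, .inr ⟨i, by lia, by lia, h⟩, .inr ⟨i + 1, by lia, by lia, h⟩]
  | succ j hij ih =>
    rcases mem_cone_or_mem_cone (f j) h with h | h
    · rcases ih (by lia) h with h | ⟨k, hik, hkj, h⟩
      exacts [.inl h, .inr ⟨k, hik, by lia, h⟩]
    · rcases hf.gap j (by lia) hjn z hz h with h | h | h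
      exacts [.inl h, .inr ⟨j, by lia, by lia, h⟩, .inr ⟨j + 1, by lia, by lia, h⟩]

theorem mono (hf : ClearFan P a f m n) (s t : ℕ) (h : m ≤ s ∧ t ≤ n := by decide) :
    ClearFan P a f s t where
  apex_mem := hf.apex_mem
  mem k hsk hkt := hf.mem k (h.1.trans hsk) (hkt.trans h.2)
  fan := hf.fan.mono h.1 h.2
  gap k hsk hkt := hf.gap k (h.1.trans hsk) (hkt.trans_le h.2)

theorem congr {g : ℕ → Pt} (hf : ClearFan P a f m n) (h : ∀ k, m ≤ k → k ≤ n → g k = f k) :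
    ClearFan P a g m n where
  apex_mem := hf.apex_mem
  mem k hmk hkn := h k hmk hkn ▸ hf.mem k hmk hkn
  fan i j hmi hij hjn := by
    rw [h i hmi (by lia), h j (by lia) hjn]
    exact hf.fan hmi hij hjn
  gap k hmk hkn := by
    rw [h k hmk hkn.le, h (k + 1) (by lia) hkn]
    exact hf.gap k hmk hkn

theorem cons (hf : ClearFan P a f (m + 1) n) (mem : f m ∈ P) (hfst : Ccw a (f (m + 1)) (f m))
    (hlst : Ccw a (f n) (f m))
    (gap : ∀ z ∈ P, z ∈ cone a (f m) (f (m + 1)) → z = a ∨ z = f m ∨ z = f (m + 1)) :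
    ClearFan P a f m n where
  apex_mem := hf.apex_mem
  mem k hmk hkn := by
    rcases hmk.eq_or_lt with rfl | hmk
    exacts [mem, hf.mem k hmk hkn]
  fan := hf.fan.cons hfst hlst
  gap k hmk hkn := by
    rcases hmk.eq_or_lt with rfl | hmk
    exacts [gap, hf.gap k hmk hkn]

theorem snoc (hf : ClearFan P a f m n) (mem : f (n + 1) ∈ P) (hlst : Ccw a (f (n + 1)) (f n))
    (hfst : Ccw a (f (n + 1)) (f m))
    (gap : ∀ z ∈ P, z ∈ cone a (f n) (f (n + 1)) → z = a ∨ z = f n ∨ z = f (n + 1)) :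
    ClearFan P a f m (n + 1) where
  apex_mem := hf.apex_mem
  mem k hmk hkn := by
    rcases hkn.eq_or_lt with rfl | hkn
    exacts [mem, hf.mem k hmk (by lia)]
  fan := hf.fan.snoc hlst hfst
  gap k hmk hkn := by
    rcases (Nat.le_of_lt_succ hkn).eq_or_lt with rfl | hkn
    exacts [gap, hf.gap k hmk hkn]

theorem exists_append {P : Finset Pt} {g h : ℕ → Pt} {d l m n : ℕ}
    (G : ClearFan P a g m (l + d)) (H : ClearFan P a h l n) (hgh : g (l + d) = h l) :
    ∃ f : ℕ → Pt, (∀ j ≤ l + d, f j = g j) ∧ (∀ j, l ≤ j → f (j + d) = h j) ∧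
      ∀ j, m ≤ j → j < n + d → Ccw a (f (j + 1)) (f j) ∧
        ∀ z ∈ P, z ∈ cone a (f j) (f (j + 1)) → z = a ∨ z = f j ∨ z = f (j + 1) := by
  let f : ℕ → Pt := fun j => if j ≤ l + d then g j else h (j - d)
  have f_left (j : ℕ) (hj : j ≤ l + d) : f j = g j := if_pos hj
  have f_right (j : ℕ) (hj : l ≤ j) : f (j + d) = h j := by
    rcases hj.eq_or_lt with rfl | hj
    · rw [f_left _ le_rfl, hgh]
    · exact (if_neg (by lia)).trans (congrArg h (Nat.add_sub_cancel j d))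
  refine ⟨f, f_left, f_right, fun j hmj hjn => ?_⟩
  rcases lt_or_ge j (l + d) with hj | hj
  · rw [f_left j hj.le, f_left (j + 1) hj]
    exact ⟨G.fan.ccw (by lia), G.gap j hmj hj⟩
  · obtain ⟨j, rfl⟩ := Nat.exists_eq_add_of_le' ((Nat.le_add_left d l).trans hj)
    rw [Nat.add_right_comm, f_right j (by lia), f_right (j + 1) (by lia)]
    exact ⟨H.fan.ccw (by lia), H.gap j (by lia) (by lia)⟩

theorem exists_hole {i₀ i₁ i₂ i₃ i₄ : ℕ} (hf : ClearFan (A ∪ B) a f m n)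
    (h : ConvexPentagon (f i₀) (f i₁) (f i₂) (f i₃) (f i₄)) (hA : f s ∈ A) (hB : f t ∈ B)
    (cut : ∀ x, m ≤ x → x ≤ n → x ∈ [i₀, i₁, i₂, i₃, i₄] ∨
      Ccw (f i₀) (f x) (f i₁) ∨ Ccw (f i₁) (f x) (f i₂) ∨ Ccw (f i₂) (f x) (f i₃) ∨
        Ccw (f i₃) (f x) (f i₄) ∨ Ccw (f i₄) (f x) (f i₀))
    (hi : (∀ e ∈ [i₀, i₁, i₂, i₃, i₄], m ≤ e ∧ e ≤ n) ∧ i₀ < i₁ ∧ s ∈ [i₀, i₁, i₂, i₃, i₄] ∧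
      t ∈ [i₀, i₁, i₂, i₃, i₄] := by decide) :
    ∃ H, DividedFiveHole A B H := by
  obtain ⟨hi, hlt, hs, ht⟩ := hi
  simp only [List.forall_mem_cons, List.not_mem_nil, false_imp_iff, implies_true, and_true] at hi
  obtain ⟨h₀, h₁, h₂, h₃, h₄⟩ := hi
  have mem_vertices {e : ℕ} (he : e ∈ [i₀, i₁, i₂, i₃, i₄]) :
      f e ∈ ({f i₀, f i₁, f i₂, f i₃, f i₄} : Finset Pt) := by
    simpa using List.mem_map_of_mem (f := f) he
  refine h.exists_dividedFiveHole ?_ hA (mem_vertices hs) hB (mem_vertices ht) ?_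
  · simp only [Finset.insert_subset_iff, Finset.singleton_subset_iff]
    exact ⟨hf.mem _ h₀.1 h₀.2, hf.mem _ h₁.1 h₁.2, hf.mem _ h₂.1 h₂.2, hf.mem _ h₃.1 h₃.2,
      hf.mem _ h₄.1 h₄.2⟩
  intro z hz hzHull
  have hcone : z ∈ cone a (f m) (f n) := by
    refine convexHull_min ?_ (convex_cone _ _ _) hzHull
    rintro _ (rfl | rfl | rfl | rfl | rfl)
    exacts [hf.fan.mem_cone h₀.1 h₀.2, hf.fan.mem_cone h₁.1 h₁.2, hf.fan.mem_cone h₂.1 h₂.2,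
      hf.fan.mem_cone h₃.1 h₃.2, hf.fan.mem_cone h₄.1 h₄.2]
  obtain ⟨e₀, e₁, e₂, e₃, e₄⟩ := h.orient_edges_nonneg hzHull
  rcases hf.eq_of_mem_cone le_rfl (by lia) le_rfl hz hcone with rfl | ⟨x, hmx, hxn, rfl⟩
  · exact absurd e₀ (hf.fan h₀.1 hlt h₁.2).rotate.rotate.orient_neg.not_ge
  · rcases cut x hmx hxn with hx | hx | hx | hx | hx | hx
    exacts [mem_vertices hx, absurd e₀ hx.orient_neg.not_ge, absurd e₁ hx.orient_neg.not_ge,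
      absurd e₂ hx.orient_neg.not_ge, absurd e₃ hx.orient_neg.not_ge,
      absurd e₄ hx.orient_neg.not_ge]

theorem exists_hole_of_caps (hf : ClearFan (A ∪ B) a f i l) (h : Cap f i j k) (h' : Cap f j k l)
    (hA : a ∈ A) (hB : f t ∈ B)
    (cut : ∀ x, i ≤ x → x ≤ l → x ∈ [l, k, j, i] ∨ Cap f i x j ∨ Cap f j x k ∨ Cap f k x l)
    (hi : i < j ∧ j < k ∧ k < l ∧ t ∈ [l, k, j, i] := by decide) :
    ∃ H, DividedFiveHole A B H := by
  obtain ⟨hij, hjk, hkl, ht⟩ := hi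
  have mem_vertices {e : ℕ} (he : e ∈ [l, k, j, i]) :
      f e ∈ ({a, f l, f k, f j, f i} : Finset Pt) :=
    Finset.mem_insert_of_mem (by simpa using List.mem_map_of_mem (f := f) he)
  have pentagon : ConvexPentagon a (f l) (f k) (f j) (f i) :=
    .of_star (hf.fan.ccw (by lia)) (hf.fan.ccw (by lia)) (hf.fan.ccw (by lia))
      (hf.fan.ccw (by lia)) (hf.fan.ccw (by lia)) (hf.fan.ccw (by lia)) h' h
  refine pentagon.exists_dividedFiveHole ?_ hA (Finset.mem_insert_self _ _) hB (mem_vertices ht) ?_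
  · simp only [Finset.insert_subset_iff, Finset.singleton_subset_iff]
    exact ⟨hf.apex_mem, hf.mem _ (by lia) le_rfl, hf.mem _ (by lia) (by lia),
      hf.mem _ (by lia) (by lia), hf.mem _ le_rfl (by lia)⟩
  intro z hz hzHull
  have hcone : z ∈ cone a (f i) (f l) := by
    refine convexHull_min ?_ (convex_cone _ _ _) hzHull
    rintro _ (rfl | rfl | rfl | rfl | rfl)
    exacts [⟨(orient_self_left _ _).ge, (orient_self_outer _ _).ge⟩,
      hf.fan.mem_cone (by lia) le_rfl, hf.fan.mem_cone (by lia) (by lia),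
      hf.fan.mem_cone (by lia) (by lia), hf.fan.mem_cone le_rfl (by lia)]
  obtain ⟨-, e₁, e₂, e₃, -⟩ := pentagon.orient_edges_nonneg hzHull
  rcases hf.eq_of_mem_cone le_rfl (by lia) le_rfl hz hcone with rfl | ⟨x, hix, hxl, rfl⟩
  · exact Finset.mem_insert_self _ _
  · rcases cut x hix hxl with hx | hx | hx | hx
    exacts [mem_vertices hx, absurd e₃ (Ccw.orient_neg hx).not_ge,
      absurd e₂ (Ccw.orient_neg hx).not_ge, absurd e₁ (Ccw.orient_neg hx).not_ge]

end ClearFan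

end Fan

/-! ### The points of the two wedges -/

/-- Two consecutive `a`-wedges of `A`, each containing two points of `B`, with the points of both
wedges in the clockwise order `f 1`, …, `f 7`. The wedges are spanned by `f 1`, `f 4`, `f 7 ∈ A`;
the set `A ∪ B` has no divided 5-hole, and no point of `A` to the right of `a` is interior to a
triangle spanned by `A`. -/
structure Config (x0 : ℝ) (A B : Finset Pt) (a : Pt) (f : ℕ → Pt) : Prop where
  left : ∀ z ∈ A, z.1 < x0
  right : ∀ z ∈ B, x0 < z.1
  gen : ∀ x ∈ A ∪ B, ∀ y ∈ A ∪ B, ∀ z ∈ A ∪ B, x ≠ y → x ≠ z → y ≠ z → orient x y z ≠ 0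
  mem₀ : a ∈ A
  mem₁ : f 1 ∈ A
  mem₂ : f 2 ∈ B
  mem₃ : f 3 ∈ B
  mem₄ : f 4 ∈ A
  mem₅ : f 5 ∈ B
  mem₆ : f 6 ∈ B
  mem₇ : f 7 ∈ A
  turn : ∀ k, 1 ≤ k → k < 7 → Ccw a (f (k + 1)) (f k)
  ccw₄₁ : Ccw a (f 4) (f 1)
  ccw₇₄ : Ccw a (f 7) (f 4)
  lt₄ : a.1 < (f 4).1
  gap : ∀ k, 1 ≤ k → k < 7 → ∀ z ∈ A ∪ B, z ∈ cone a (f k) (f (k + 1)) →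
    z = a ∨ z = f k ∨ z = f (k + 1)
  inner : ∀ x ∈ A, a.1 < x.1 → ∀ u ∈ A, ∀ v ∈ A, ∀ w ∈ A, Ccw x u v → Ccw x v w → ¬ Ccw x w u
  noHole : ¬ ∃ H, DividedFiveHole A B H

namespace Config

variable {x0 : ℝ} {A B : Finset Pt} {a x y z : Pt} {f : ℕ → Pt} {i j k m n : ℕ}

theorem mem_union (C : Config x0 A B a f) (hk : k ∈ Finset.Icc 1 7) : f k ∈ A ∪ B := by
  have := C.mem₁; have := C.mem₂; have := C.mem₃; have := C.mem₄
  have := C.mem₅; have := C.mem₆; have := C.mem₇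
  rw [Finset.mem_Icc] at hk
  obtain ⟨_, _⟩ := hk
  interval_cases k <;> simp [*]

theorem apex_lt (C : Config x0 A B a f) : a.1 < x0 := C.left a C.mem₀

theorem ne_of_mem (C : Config x0 A B a f) (hx : x ∈ A) (hy : y ∈ B) : x ≠ y := fun h =>
  ((C.left x hx).trans (C.right y hy)).ne (congrArg Prod.fst h)

theorem ccw_or_ccw (C : Config x0 A B a f) (hx : x ∈ A ∪ B) (hy : y ∈ A ∪ B) (hz : z ∈ A ∪ B)
    (hxy : x ≠ y) (hxz : x ≠ z) (hyz : y ≠ z) : Ccw x y z ∨ Ccw x z y :=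
  (C.gen x hx y hy z hz hxy hxz hyz).lt_or_gt.symm.imp_right ccw_swap_of_orient_neg

theorem cap_of_not_cup (C : Config x0 A B a f) (F : ClearFan (A ∪ B) a f m n)
    (h : ¬ Cup f i j k) (hi : m ≤ i ∧ i < j ∧ j < k ∧ k ≤ n := by decide) : Cap f i j k := by
  refine ((C.ccw_or_ccw (F.mem i (by lia) (by lia)) (F.mem j (by lia) (by lia))
    (F.mem k (by lia) (by lia)) ?_ ?_ ?_).resolve_left h).rotate
  exacts [(F.fan.ccw (by lia)).ne_right.symm, (F.fan.ccw (by lia)).ne_right.symm,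
    (F.fan.ccw (by lia)).ne_right.symm]

theorem cup_of_not_cap (C : Config x0 A B a f) (F : ClearFan (A ∪ B) a f m n)
    (h : ¬ Cap f i j k) (hi : m ≤ i ∧ i < j ∧ j < k ∧ k ≤ n := by decide) : Cup f i j k :=
  by_contra fun hcup => h (C.cap_of_not_cup F hcup hi)

theorem cup_of_mem (C : Config x0 A B a f) (F : IsFan a f m n)
    (hi : f i ∈ B) (hj : f j ∈ A) (hk : f k ∈ B)
    (h : m ≤ i ∧ i < j ∧ j < k ∧ k ≤ n := by decide) : Cup f i j k :=
  .of_lt_of_lt_of_lt (F.ccw (by lia)) (F.ccw (by lia)) (F.ccw (by lia)) C.apex_lt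
    (C.right _ hi) (C.left _ hj) (C.right _ hk)

theorem cap_of_mem (C : Config x0 A B a f) (F : IsFan a f m n)
    (hi : f i ∈ A) (hj : f j ∈ B) (hk : f k ∈ A)
    (h : m ≤ i ∧ i < j ∧ j < k ∧ k ≤ n := by decide) : Cap f i j k :=
  .of_gt_of_gt_of_gt (F.ccw (by lia)) (F.ccw (by lia)) (F.ccw (by lia)) C.apex_lt
    (C.left _ hi) (C.right _ hj) (C.left _ hk)

theorem cap_of_inner (C : Config x0 A B a f) (F : ClearFan (A ∪ B) a f m n) (hi : f i ∈ A)
    (hj : f j ∈ A) (hk : f k ∈ A) (hlt : a.1 < (f j).1)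
    (h : m ≤ i ∧ i < j ∧ j < k ∧ k ≤ n := by decide) : Cap f i j k :=
  C.cap_of_not_cup F (fun hcup => C.inner _ hj hlt _ hk _ hi _ C.mem₀ hcup.rotate
    (F.fan.ccw (i := i) (j := j) (by lia)).rotate
    (F.fan.ccw (i := j) (j := k) (by lia)).rotate.rotate) h

theorem clearFan_one (C : Config x0 A B a f) (F : ClearFan (A ∪ B) a f 2 8) (n : ℕ)
    (h : Ccw a (f n) (f 1)) (hn : n ≤ 8 := by decide) : ClearFan (A ∪ B) a f 1 n :=
  (F.mono 2 n ⟨le_rfl, hn⟩).cons (Finset.mem_union_left B C.mem₁) (C.turn 1 le_rfl (by decide)) h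
    (C.gap 1 le_rfl (by decide))

theorem ccw_apex_one_of_not (C : Config x0 A B a f) (F : ClearFan (A ∪ B) a f 2 8)
    (h : ¬ Ccw a (f k) (f 1)) (hk : 4 < k ∧ k ≤ 8 := by decide) : Ccw a (f 1) (f k) := by
  refine (C.ccw_or_ccw F.apex_mem (F.mem k (by lia) (by lia)) (Finset.mem_union_left B C.mem₁)
    (F.fan.ccw (i := 2) (by lia)).ne_left C.ccw₄₁.ne_outer ?_).resolve_left h
  intro hk1
  exact C.ccw₄₁.not_swap (hk1 ▸ F.fan.ccw (by lia))

end Config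

namespace Config

variable {x0 : ℝ} {A B : Finset Pt} {a : Pt} {f : ℕ → Pt}

section Patterns

theorem cup₂₄₅ (C : Config x0 A B a f) (F : ClearFan (A ∪ B) a f 2 8) : Cup f 2 4 5 :=
  C.cup_of_mem F.fan C.mem₂ C.mem₄ C.mem₅

theorem cup₂₄₆ (C : Config x0 A B a f) (F : ClearFan (A ∪ B) a f 2 8) : Cup f 2 4 6 :=
  C.cup_of_mem F.fan C.mem₂ C.mem₄ C.mem₆

theorem cup₃₄₅ (C : Config x0 A B a f) (F : ClearFan (A ∪ B) a f 2 8) : Cup f 3 4 5 :=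
  C.cup_of_mem F.fan C.mem₃ C.mem₄ C.mem₅

theorem cup₃₄₆ (C : Config x0 A B a f) (F : ClearFan (A ∪ B) a f 2 8) : Cup f 3 4 6 :=
  C.cup_of_mem F.fan C.mem₃ C.mem₄ C.mem₆

theorem cap₄₅₇ (C : Config x0 A B a f) (F : ClearFan (A ∪ B) a f 2 8) : Cap f 4 5 7 :=
  C.cap_of_mem F.fan C.mem₄ C.mem₅ C.mem₇

theorem cap₄₆₇ (C : Config x0 A B a f) (F : ClearFan (A ∪ B) a f 2 8) : Cap f 4 6 7 :=
  C.cap_of_mem F.fan C.mem₄ C.mem₆ C.mem₇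

theorem clearFan₁₄ (C : Config x0 A B a f) (F : ClearFan (A ∪ B) a f 2 8) :
    ClearFan (A ∪ B) a f 1 4 :=
  C.clearFan_one F 4 C.ccw₄₁

theorem cap₁₂₄ (C : Config x0 A B a f) (F : ClearFan (A ∪ B) a f 2 8) : Cap f 1 2 4 :=
  C.cap_of_mem (C.clearFan₁₄ F).fan C.mem₁ C.mem₂ C.mem₄

theorem cap₄₅₆_or_cap₅₆₇ (C : Config x0 A B a f) (F : ClearFan (A ∪ B) a f 2 8) :
    Cap f 4 5 6 ∨ Cap f 5 6 7 := by
  by_contra! h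
  exact (F.fan.cup_trans (C.cup_of_not_cap F h.1) (C.cup_of_not_cap F h.2)).1.not_cap (C.cap₄₅₇ F)

theorem not_cap₄₅₆_and_cap₅₆₇ (C : Config x0 A B a f) (F : ClearFan (A ∪ B) a f 2 8)
    (h₄ : Cap f 4 5 6) : ¬ Cap f 5 6 7 := fun h₅ =>
  C.noHole ((F.mono 4 7).exists_hole_of_caps h₄ h₅ C.mem₀ C.mem₅
    fun x _ _ => by interval_cases x <;> simp)

theorem cup₅₆₇ (C : Config x0 A B a f) (F : ClearFan (A ∪ B) a f 2 8) (h : Cap f 4 5 6) :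
    Cup f 5 6 7 :=
  C.cup_of_not_cap F (C.not_cap₄₅₆_and_cap₅₆₇ F h)

theorem cup₄₅₆ (C : Config x0 A B a f) (F : ClearFan (A ∪ B) a f 2 8) (h : Cap f 5 6 7) :
    Cup f 4 5 6 :=
  C.cup_of_not_cap F fun h₄ => C.not_cap₄₅₆_and_cap₅₆₇ F h₄ h

theorem cup₆₇₈_of_mem (C : Config x0 A B a f) (F : ClearFan (A ∪ B) a f 2 8) (h : f 8 ∈ B) :
    Cup f 6 7 8 :=
  C.cup_of_mem F.fan C.mem₆ C.mem₇ h

theorem cup₆₇₈ (C : Config x0 A B a f) (F : ClearFan (A ∪ B) a f 2 8) (h : Cap f 4 5 6) :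
    Cup f 6 7 8 :=
  C.cup_of_not_cap F fun h' =>
    C.noHole ((F.mono 4 8).exists_hole_of_caps (C.cap₄₆₇ F) h' C.mem₀ C.mem₆
      fun x _ _ => by interval_cases x <;> simp [h])

theorem cap₂₃₄ (C : Config x0 A B a f) (F : ClearFan (A ∪ B) a f 2 8) : Cap f 2 3 4 := by
  refine C.cap_of_not_cup F fun h₂₃₄ => C.noHole ?_
  by_cases h : Cap f 4 5 6
  · have h₂₃₅ : Cup f 2 3 5 := (F.fan.cup_trans h₂₃₄ (C.cup₃₄₅ F)).1
    have h₂₅₆ : Cup f 2 5 6 := C.cup_of_not_cap F fun h' =>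
      C.noHole ((F.mono 2 6).exists_hole (F.fan.convexPentagon_cap_fth h' h₂₃₄ (C.cup₃₄₆ F))
        C.mem₄ C.mem₂ fun x _ _ => by interval_cases x <;> simp)
    exact (F.mono 2 8).exists_hole
      (F.fan.convexPentagon_of_cups h₂₅₆ (C.cup₅₆₇ F h) (C.cup₆₇₈ F h)) C.mem₇ C.mem₂
      fun x _ _ => by interval_cases x <;> simp [h₂₃₅, C.cup₂₄₅ F]
  · exact (F.mono 2 6).exists_hole
      (F.fan.convexPentagon_of_cups h₂₃₄ (C.cup₃₄₅ F) (C.cup_of_not_cap F h)) C.mem₄ C.mem₂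
      fun x _ _ => by interval_cases x <;> simp

theorem cup₁₂₃ (C : Config x0 A B a f) (F : ClearFan (A ∪ B) a f 2 8) : Cup f 1 2 3 :=
  C.cup_of_not_cap (C.clearFan₁₄ F) fun h =>
    C.noHole ((C.clearFan₁₄ F).exists_hole_of_caps h (C.cap₂₃₄ F) C.mem₀ C.mem₂
      fun x _ _ => by interval_cases x <;> simp)

theorem ccw_of_cup_of_cup (C : Config x0 A B a f) (F : ClearFan (A ∪ B) a f 2 8) {j k l : ℕ}
    (hk : Ccw a (f k) (f 1)) (h : Cup f 1 j k) (h' : Cup f j k l)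
    (hj : 2 ≤ j ∧ j < k ∧ k < l ∧ 4 < l ∧ l ≤ 8 := by decide) : Ccw a (f l) (f 1) :=
  by_contra fun hl => Ccw.not_ccw_of_wrap (F.fan.ccw (by lia)) hk (F.fan.ccw (by lia))
    (C.ccw_apex_one_of_not F hl (by lia)) h h'

theorem ccw_of_cup (C : Config x0 A B a f) (F : ClearFan (A ∪ B) a f 2 8) {l : ℕ}
    (h : Cup f 2 3 l) (hl : 4 < l ∧ l ≤ 8 := by decide) : Ccw a (f l) (f 1) :=
  C.ccw_of_cup_of_cup F (C.clearFan₁₄ F).fan.ccw (C.cup₁₂₃ F) h (by lia)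

theorem cup₂₄₇ (C : Config x0 A B a f) (F : ClearFan (A ∪ B) a f 2 8) (hlt : a.1 < (f 7).1)
    (h : Ccw a (f 7) (f 1) ∨ f 8 ∈ A) : Cup f 2 4 7 := by
  refine C.cup_of_not_cap F fun h₂₄₇ => C.noHole ?_
  rcases h with h₇₁ | h₈
  · exact (C.clearFan_one F 7 h₇₁).exists_hole_of_caps (C.cap₁₂₄ F) h₂₄₇ C.mem₀ C.mem₂
      fun x _ _ => by interval_cases x <;> simp [C.cap₂₃₄ F, C.cap₄₅₇ F, C.cap₄₆₇ F]
  · exact F.exists_hole_of_caps h₂₄₇ (C.cap_of_inner F C.mem₄ C.mem₇ h₈ hlt) C.mem₀ C.mem₂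
      fun x _ _ => by interval_cases x <;> simp [C.cap₂₃₄ F, C.cap₄₅₇ F, C.cap₄₆₇ F]

end Patterns

section Cap456

theorem cup₅₆₈_and_cup₅₇₈ (C : Config x0 A B a f) (F : ClearFan (A ∪ B) a f 2 8)
    (h : Cap f 4 5 6) : Cup f 5 6 8 ∧ Cup f 5 7 8 :=
  F.fan.cup_trans (C.cup₅₆₇ F h) (C.cup₆₇₈ F h)

theorem cap₃₅₆ (C : Config x0 A B a f) (F : ClearFan (A ∪ B) a f 2 8) (h : Cap f 4 5 6) :
    Cap f 3 5 6 :=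
  C.cap_of_not_cup F fun h' => C.noHole ((F.mono 3 8).exists_hole
    (F.fan.convexPentagon_of_cups h' (C.cup₅₆₇ F h) (C.cup₆₇₈ F h)) C.mem₇ C.mem₃
    fun x _ _ => by interval_cases x <;> simp [C.cup₃₄₅ F])

theorem cup₂₃₅ (C : Config x0 A B a f) (F : ClearFan (A ∪ B) a f 2 8) (h : Cap f 4 5 6) :
    Cup f 2 3 5 :=
  C.cup_of_not_cap F fun h' => C.noHole ((F.mono 2 6).exists_hole
    (F.fan.convexPentagon_caps h' (C.cap₃₅₆ F h) (C.cup₂₄₆ F)) C.mem₄ C.mem₂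
    fun x _ _ => by interval_cases x <;> simp)

theorem ccw_five_one (C : Config x0 A B a f) (F : ClearFan (A ∪ B) a f 2 8) (h : Cap f 4 5 6) :
    Ccw a (f 5) (f 1) :=
  C.ccw_of_cup F (C.cup₂₃₅ F h)

theorem cap₁₅₆ (C : Config x0 A B a f) (F : ClearFan (A ∪ B) a f 2 8) (h : Cap f 4 5 6)
    (h₆₁ : Ccw a (f 6) (f 1)) : Cap f 1 5 6 := by
  have F₁₆ := C.clearFan_one F 6 h₆₁
  refine C.cap_of_not_cup F₁₆ fun h₁₅₆ => ?_
  have F₁₇ := C.clearFan_one F 7 (C.ccw_of_cup_of_cup F h₆₁ h₁₅₆ (C.cup₅₆₇ F h))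
  exact (F₁₇.fan.cup_trans h₁₅₆ (C.cup₅₆₇ F h)).2.not_cap
    (C.cap_of_mem F₁₇.fan C.mem₁ C.mem₆ C.mem₇)

theorem cap₂₃₆ (C : Config x0 A B a f) (F : ClearFan (A ∪ B) a f 2 8) (h : Cap f 4 5 6) :
    Cap f 2 3 6 := by
  refine C.cap_of_not_cup F fun h₂₃₆ => C.noHole ?_
  have h₆₁ := C.ccw_of_cup F h₂₃₆
  have F₁₆ := C.clearFan_one F 6 h₆₁
  exact F₁₆.exists_hole (F₁₆.fan.convexPentagon_cap_fth (C.cap₁₅₆ F h h₆₁) (C.cup₁₂₃ F) h₂₃₆)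
    C.mem₁ C.mem₂ fun x _ _ => by interval_cases x <;> simp [C.cup₃₄₆ F]

theorem cup₃₆₇ (C : Config x0 A B a f) (F : ClearFan (A ∪ B) a f 2 8) (h : Cap f 4 5 6)
    (h₂₄₇ : Cup f 2 4 7) : Cup f 3 6 7 :=
  C.cup_of_not_cap F fun h' => C.noHole ((F.mono 2 7).exists_hole
    (F.fan.convexPentagon_caps (C.cap₂₃₆ F h) h' h₂₄₇) C.mem₄ C.mem₂
    fun x _ _ => by interval_cases x <;> simp [C.cap₃₅₆ F h])

theorem cup₃₅₈ (C : Config x0 A B a f) (F : ClearFan (A ∪ B) a f 2 8) (h : Cap f 4 5 6)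
    (h₂₄₇ : Cup f 2 4 7) : Cup f 3 5 8 :=
  C.cup_of_not_cap F fun h' => C.noHole ((F.mono 3 8).exists_hole
    (F.fan.convexPentagon_cap_snd h' (C.cup₃₆₇ F h h₂₄₇) (C.cup₆₇₈ F h)) C.mem₇ C.mem₃
    fun x _ _ => by interval_cases x <;> simp [C.cup₃₄₆ F])

theorem not_cup₂₄₇_of_cap₄₅₆ (C : Config x0 A B a f) (F : ClearFan (A ∪ B) a f 2 8)
    (h : Cap f 4 5 6) : ¬ Cup f 2 4 7 := fun h₂₄₇ => by
  have h₁₂₃ := C.cup₁₂₃ F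
  have h₂₃₅ := C.cup₂₃₅ F h
  have h₃₅₈ := C.cup₃₅₈ F h h₂₄₇
  have h₅₁ := C.ccw_five_one F h
  have h₁₃₅ := ((C.clearFan_one F 5 h₅₁).fan.cup_trans h₁₂₃ h₂₃₅).2
  have F₁₈ := C.clearFan_one F 8 (C.ccw_of_cup_of_cup F h₅₁ h₁₃₅ h₃₅₈)
  obtain ⟨h₅₆₈, h₅₇₈⟩ := C.cup₅₆₈_and_cup₅₇₈ F h
  exact C.noHole (F₁₈.exists_hole (F₁₈.fan.convexPentagon_of_cups h₁₂₃ h₂₃₅ h₃₅₈) C.mem₁ C.mem₂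
    fun x _ _ => by interval_cases x <;> simp [C.cup₃₄₅ F, h₅₆₈, h₅₇₈])

end Cap456

section Cap567

theorem cup₅₇₈ (C : Config x0 A B a f) (F : ClearFan (A ∪ B) a f 2 8) (h : Cap f 5 6 7) :
    Cup f 5 7 8 :=
  C.cup_of_not_cap F fun h' => C.noHole ((F.mono 4 8).exists_hole_of_caps (C.cap₄₅₇ F) h' C.mem₀
    C.mem₅ fun x _ _ => by interval_cases x <;> simp [h])

theorem cup₂₃₆ (C : Config x0 A B a f) (F : ClearFan (A ∪ B) a f 2 8) (h : Cap f 5 6 7) :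
    Cup f 2 3 6 :=
  C.cup_of_not_cap F fun h' => C.noHole ((F.mono 2 6).exists_hole
    (F.fan.convexPentagon_cap_snd h' (C.cup₂₄₅ F) (C.cup₄₅₆ F h)) C.mem₄ C.mem₂
    fun x _ _ => by interval_cases x <;> simp)

theorem ccw_six_one (C : Config x0 A B a f) (F : ClearFan (A ∪ B) a f 2 8) (h : Cap f 5 6 7) :
    Ccw a (f 6) (f 1) :=
  C.ccw_of_cup F (C.cup₂₃₆ F h)

theorem cup₃₅₆ (C : Config x0 A B a f) (F : ClearFan (A ∪ B) a f 2 8) (h : Cap f 5 6 7) :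
    Cup f 3 5 6 :=
  (F.fan.cup_trans (C.cup₃₄₅ F) (C.cup₄₅₆ F h)).2

theorem cap₂₃₅ (C : Config x0 A B a f) (F : ClearFan (A ∪ B) a f 2 8) (h : Cap f 5 6 7) :
    Cap f 2 3 5 :=
  have F₁₆ := C.clearFan_one F 6 (C.ccw_six_one F h)
  C.cap_of_not_cup F fun h' => C.noHole (F₁₆.exists_hole
    (F₁₆.fan.convexPentagon_of_cups (C.cup₁₂₃ F) h' (C.cup₃₅₆ F h)) C.mem₁ C.mem₂
    fun x _ _ => by interval_cases x <;> simp [C.cup₃₄₅ F])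

theorem cup₃₅₇ (C : Config x0 A B a f) (F : ClearFan (A ∪ B) a f 2 8) (h : Cap f 5 6 7)
    (h₂₄₇ : Cup f 2 4 7) : Cup f 3 5 7 :=
  C.cup_of_not_cap F fun h' => C.noHole ((F.mono 2 7).exists_hole
    (F.fan.convexPentagon_caps (C.cap₂₃₅ F h) h' h₂₄₇) C.mem₄ C.mem₂
    fun x _ _ => by interval_cases x <;> simp [h])

theorem cup₃₆₈ (C : Config x0 A B a f) (F : ClearFan (A ∪ B) a f 2 8) (h : Cap f 5 6 7)
    (h₂₄₇ : Cup f 2 4 7) : Cup f 3 6 8 :=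
  C.cup_of_not_cap F fun h' => C.noHole ((F.mono 3 8).exists_hole
    (F.fan.convexPentagon_cap_trd h' (C.cup₃₅₇ F h h₂₄₇) (C.cup₅₇₈ F h)) C.mem₇ C.mem₃
    fun x _ _ => by interval_cases x <;> simp [C.cup₃₄₅ F])

theorem not_cup₂₄₇_of_cap₅₆₇ (C : Config x0 A B a f) (F : ClearFan (A ∪ B) a f 2 8)
    (h : Cap f 5 6 7) (hlt : a.1 < (f 7).1) : ¬ Cup f 2 4 7 := fun h₂₄₇ => by
  have h₁₂₃ := C.cup₁₂₃ F
  have h₂₃₆ := C.cup₂₃₆ F h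
  have h₃₆₈ := C.cup₃₆₈ F h h₂₄₇
  have h₆₁ := C.ccw_six_one F h
  have h₁₃₆ := ((C.clearFan_one F 6 h₆₁).fan.cup_trans h₁₂₃ h₂₃₆).2
  have F₁₈ := C.clearFan_one F 8 (C.ccw_of_cup_of_cup F h₆₁ h₁₃₆ h₃₆₈)
  have h₇ : Cup f 6 7 8 ∨ Cap f 1 7 8 :=
    (Finset.mem_union.1 (F.mem 8 (by decide) le_rfl)).symm.imp (C.cup₆₇₈_of_mem F)
      fun h₈ => C.cap_of_inner F₁₈ C.mem₁ C.mem₇ h₈ hlt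
  exact C.noHole (F₁₈.exists_hole (F₁₈.fan.convexPentagon_of_cups h₁₂₃ h₂₃₆ h₃₆₈) C.mem₁ C.mem₂
    fun x _ _ => by interval_cases x <;> simp [C.cup₃₄₆ F, C.cup₃₅₆ F h, h₇])

end Cap567

section BeyondFan

theorem not_ccw_seven_one_and_notMem (C : Config x0 A B a f) (F : ClearFan (A ∪ B) a f 2 8)
    (hlt : a.1 < (f 7).1) : ¬ Ccw a (f 7) (f 1) ∧ f 8 ∉ A := by
  rw [← not_or]
  intro h
  have h₂₄₇ := C.cup₂₄₇ F hlt h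
  rcases C.cap₄₅₆_or_cap₅₆₇ F with h | h
  exacts [C.not_cup₂₄₇_of_cap₄₅₆ F h h₂₄₇, C.not_cup₂₄₇_of_cap₅₆₇ F h hlt h₂₄₇]

theorem mem₈ (C : Config x0 A B a f) (F : ClearFan (A ∪ B) a f 2 8) (hlt : a.1 < (f 7).1) :
    f 8 ∈ B :=
  (Finset.mem_union.1 (F.mem 8 (by decide) le_rfl)).resolve_left
    (C.not_ccw_seven_one_and_notMem F hlt).2

theorem ccw_one_seven (C : Config x0 A B a f) (F : ClearFan (A ∪ B) a f 2 8)
    (hlt : a.1 < (f 7).1) : Ccw a (f 1) (f 7) :=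
  C.ccw_apex_one_of_not F (C.not_ccw_seven_one_and_notMem F hlt).1

theorem ccw_one_eight (C : Config x0 A B a f) (F : ClearFan (A ∪ B) a f 2 8)
    (hlt : a.1 < (f 7).1) : Ccw a (f 1) (f 8) :=
  C.ccw_apex_one_of_not F fun h =>
    (C.not_ccw_seven_one_and_notMem F hlt).1 (C.clearFan_one F 8 h).fan.ccw

theorem ccw_five (C : Config x0 A B a f) (F : ClearFan (A ∪ B) a f 2 8) : Ccw a (f 5) (f 1) := by
  rcases C.cap₄₅₆_or_cap₅₆₇ F with h | h
  exacts [C.ccw_five_one F h, (C.clearFan_one F 6 (C.ccw_six_one F h)).fan.ccw]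

theorem ccw_one_eight_of_ccw (C : Config x0 A B a f) (F : ClearFan (A ∪ B) a f 2 8)
    (hlt : a.1 < (f 7).1) {k : ℕ} (h : Ccw a (f k) (f 1)) (hk : 2 ≤ k ∧ k < 8 := by decide) :
    Ccw (f 1) (f 8) (f k) :=
  .of_surround (C.ccw_one_eight F hlt) (F.fan.ccw (by lia)) h

theorem ccw_one_eight_six (C : Config x0 A B a f) (F : ClearFan (A ∪ B) a f 2 8)
    (hlt : a.1 < (f 7).1) : Ccw (f 1) (f 8) (f 6) := by
  by_cases h₆₁ : Ccw a (f 6) (f 1)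
  · exact C.ccw_one_eight_of_ccw F hlt h₆₁
  rcases C.cap₄₅₆_or_cap₅₆₇ F with h | h
  · refine ((C.ccw_or_ccw (F.mem 6 (by decide) (by decide)) (F.mem 8 (by decide) le_rfl)
      (Finset.mem_union_left B C.mem₁) F.fan.ccw.ne_right.symm (C.ne_of_mem C.mem₁ C.mem₆).symm
      (C.ne_of_mem C.mem₁ (C.mem₈ F hlt)).symm).resolve_left ?_).rotate
    exact Ccw.not_ccw_of_wrap F.fan.ccw F.fan.ccw (C.ccw_one_eight F hlt) (C.ccw_five F)
      (C.cup₅₆₈_and_cup₅₇₈ F h).1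
  · exact absurd (C.ccw_six_one F h) h₆₁

theorem ccw_one_eight_of_le (C : Config x0 A B a f) (F : ClearFan (A ∪ B) a f 2 8)
    (hlt : a.1 < (f 7).1) {k : ℕ} (hk : 2 ≤ k ∧ k < 8) : Ccw (f 1) (f 8) (f k) := by
  obtain ⟨h2k, hk8⟩ := hk
  have F₁₅ := C.clearFan_one F 5 (C.ccw_five F)
  rcases lt_or_ge 5 k with h5k | hk5
  · interval_cases k
    · exact C.ccw_one_eight_six F hlt
    · exact .of_gt_of_gt_of_gt F.fan.ccw (C.ccw_one_eight F hlt) (C.ccw_one_seven F hlt) C.apex_lt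
        (C.left _ C.mem₇) (C.right _ (C.mem₈ F hlt)) (C.left _ C.mem₁)
  · exact C.ccw_one_eight_of_ccw F hlt (F₁₅.fan.ccw (by lia)) (by lia)

theorem not_clearFan_four_nine (C : Config x0 A B a f) (F : ClearFan (A ∪ B) a f 2 8)
    (hlt : a.1 < (f 7).1) (hs : Ccw (f 1) (f 8) (f 9)) :
    ¬ ClearFan (A ∪ B) a f 4 9 := fun G => C.noHole <| by
  have cap_eight_nine {k : ℕ} (hk : 4 ≤ k ∧ k < 8) : Cap f k 8 9 :=
    .of_ccw_of_ccw (C.ccw_one_eight F hlt) G.fan.ccw hs (G.fan.ccw (by lia))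
      (C.ccw_one_eight_of_le F hlt (by lia))
  have h₅₈₉ := cap_eight_nine (k := 5) (by decide)
  have h₆₈₉ := cap_eight_nine (k := 6) (by decide)
  have h₇₈₉ := cap_eight_nine (k := 7) (by decide)
  rcases C.cap₄₅₆_or_cap₅₆₇ F with h | h
  · have h₆₇₉ : Cup f 6 7 9 := C.cup_of_not_cap G fun h' => C.noHole
      (G.exists_hole_of_caps (C.cap₄₆₇ F) h' C.mem₀ C.mem₆
        fun x _ _ => by interval_cases x <;> simp [h, h₇₈₉])
    exact (G.mono 5 9).exists_hole (G.fan.convexPentagon_cap_fth h₅₈₉ (C.cup₅₆₇ F h) h₆₇₉)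
      C.mem₇ C.mem₅ fun x _ _ => by interval_cases x <;> simp
  · have h₅₇₉ : Cup f 5 7 9 := C.cup_of_not_cap G fun h' => C.noHole
      (G.exists_hole_of_caps (C.cap₄₅₇ F) h' C.mem₀ C.mem₅
        fun x _ _ => by interval_cases x <;> simp [h, h₇₈₉])
    have h₅₆₈ : Cap f 5 6 8 := C.cap_of_not_cup F fun h' => C.noHole ((F.mono 3 8).exists_hole
      (F.fan.convexPentagon_of_cups (C.cup₃₄₅ F) (C.cup₄₅₆ F h) h') C.mem₄ C.mem₃
      fun x _ _ => by interval_cases x <;> simp [C.cup₆₇₈_of_mem F (C.mem₈ F hlt)])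
    exact (G.mono 5 9).exists_hole (G.fan.convexPentagon_caps h₅₆₈ h₆₈₉ h₅₇₉)
      C.mem₇ C.mem₅ fun x _ _ => by interval_cases x <;> simp

theorem not_clearFan_zero_four (C : Config x0 A B a f) (F : ClearFan (A ∪ B) a f 2 8)
    (hlt : a.1 < (f 7).1) (hs : Ccw (f 1) (f 8) (f 0)) : ¬ ClearFan (A ∪ B) a f 0 4 := fun G => by
  have h₀₁₂ : Cap f 0 1 2 := C.cap_of_not_cup G fun h =>
    (Ccw.of_mem_triangle (C.ccw_one_eight F hlt) F.fan.ccw (C.turn 1 le_rfl (by decide))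
      hs.rotate.rotate h).not_swap (G.fan.ccw (i := 0) (j := 1)).rotate.rotate
  exact C.noHole (G.exists_hole_of_caps h₀₁₂ (C.cap₁₂₄ F) C.mem₀ C.mem₂
    fun x _ _ => by interval_cases x <;> simp [C.cap₂₃₄ F])

end BeyondFan

end Config

/-! ### Points outside the two wedges -/

/-- The eight points named in a `Config`: the apex `a` and `f 1`, …, `f 7`. -/
def core (a : Pt) (f : ℕ → Pt) : Set Pt := insert a (f '' Set.Icc 1 7)

/-- A `Config` with points of `A` and of `B` outside the core, no proper part of which cut out by
a convex set is again of this kind. -/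
structure MinimalConfig (x0 : ℝ) (A B : Finset Pt) (a : Pt) (f : ℕ → Pt) : Prop
    extends Config x0 A B a f where
  extra_left : ∃ z ∈ A, z ∉ core a f
  extra_right : ∃ z ∈ B, z ∉ core a f
  minimal : ∀ K, Convex ℝ K → core a f ⊆ K → (∃ z ∈ A, z ∈ K ∧ z ∉ core a f) →
    (∃ z ∈ B, z ∈ K ∧ z ∉ core a f) → ∀ z ∈ A ∪ B, z ∈ K

section Core

variable {x0 : ℝ} {A B : Finset Pt} {a b o s z : Pt} {f g : ℕ → Pt} {i j k : ℕ}

theorem ne_apex_of_notMem_core (hz : z ∉ core a f) : z ≠ a := fun h => hz (.inl h)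

theorem ne_of_notMem_core (hz : z ∉ core a f) (hk : 1 ≤ k ∧ k ≤ 7) : z ≠ f k :=
  fun h => hz (.inr ⟨k, hk, h.symm⟩)

theorem core_congr (h : ∀ k, 1 ≤ k → k ≤ 7 → g k = f k) : core a g = core a f :=
  congrArg (insert a) (Set.image_congr fun k hk => h k hk.1 hk.2)

namespace Config

theorem congr (C : Config x0 A B a f) (h : ∀ k, 1 ≤ k → k ≤ 7 → g k = f k) :
    Config x0 A B a g where
  left := C.left
  right := C.right
  gen := C.gen
  mem₀ := C.mem₀
  mem₁ := h 1 (by decide) (by decide) ▸ C.mem₁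
  mem₂ := h 2 (by decide) (by decide) ▸ C.mem₂
  mem₃ := h 3 (by decide) (by decide) ▸ C.mem₃
  mem₄ := h 4 (by decide) (by decide) ▸ C.mem₄
  mem₅ := h 5 (by decide) (by decide) ▸ C.mem₅
  mem₆ := h 6 (by decide) (by decide) ▸ C.mem₆
  mem₇ := h 7 (by decide) (by decide) ▸ C.mem₇
  turn k h1k hk7 := by
    rw [h k h1k hk7.le, h (k + 1) (by lia) hk7]
    exact C.turn k h1k hk7
  ccw₄₁ := by
    rw [h 1 (by decide) (by decide), h 4 (by decide) (by decide)]
    exact C.ccw₄₁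
  ccw₇₄ := by
    rw [h 4 (by decide) (by decide), h 7 (by decide) (by decide)]
    exact C.ccw₇₄
  lt₄ := h 4 (by decide) (by decide) ▸ C.lt₄
  gap k h1k hk7 := by
    rw [h k h1k hk7.le, h (k + 1) (by lia) hk7]
    exact C.gap k h1k hk7
  inner := C.inner
  noHole := C.noHole

theorem mem_core_of_mem_cone (C : Config x0 A B a f) (hz : z ∈ A ∪ B)
    (h : z ∈ cone a (f i) (f j)) (hij : 1 ≤ i ∧ i < j ∧ j ≤ 7 := by decide) : z ∈ core a f := by
  obtain ⟨h1i, hij, hj7⟩ := hij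
  have mem_core_of_gap {k : ℕ} (h1k : 1 ≤ k) (hk7 : k < 7) (h : z ∈ cone a (f k) (f (k + 1))) :
      z ∈ core a f := by
    rcases C.gap k h1k hk7 z hz h with rfl | rfl | rfl
    exacts [.inl rfl, .inr ⟨k, ⟨h1k, hk7.le⟩, rfl⟩, .inr ⟨k + 1, ⟨by lia, hk7⟩, rfl⟩]
  induction j, hij using Nat.le_induction with
  | base => exact mem_core_of_gap h1i hj7 h
  | succ j hij ih =>
    rcases mem_cone_or_mem_cone (f j) h with h | h
    exacts [ih h (by lia), mem_core_of_gap (by lia) hj7 h]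

theorem ccw_of_notMem_core (C : Config x0 A B a f) (h₁₇ : Ccw a (f 1) (f 7)) (hz : z ∈ A ∪ B)
    (hzc : z ∉ core a f) : Ccw a (f 1) z ∧ Ccw a z (f 7) := by
  rcases notMem_cone.1 fun h => hzc (C.mem_core_of_mem_cone (i := 1) (j := 4) hz h) with h₁ | h₁ <;>
    rcases notMem_cone.1 fun h => hzc (C.mem_core_of_mem_cone (i := 4) (j := 7) hz h) with h₇ | h₇
  · exact ⟨h₁, .surround_left C.ccw₄₁ h₁₇ C.ccw₇₄ h₇ h₁⟩
  · exact ⟨h₁, h₇⟩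
  · exact absurd h₁ h₇.not_swap
  · exact ⟨.surround_right C.ccw₇₄ C.ccw₄₁ h₁₇ h₇ h₁, h₇⟩

theorem exists_first_cw (C : Config x0 A B a f) {S : Finset Pt} (hS : S ⊆ A ∪ B) (ho : o ∈ A ∪ B)
    (hne : S.Nonempty) (half : ∀ x ∈ S, Ccw o x b) : ∃ s ∈ S, ∀ x ∈ S, x ≠ s → Ccw o x s :=
  exists_first_cw_of_halfPlane hne half fun x hx y hy =>
    C.ccw_or_ccw ho (hS hx) (hS hy) (half x hx).ne_left (half y hy).ne_left

theorem exists_first_ccw (C : Config x0 A B a f) {S : Finset Pt} (hS : S ⊆ A ∪ B) (ho : o ∈ A ∪ B)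
    (hne : S.Nonempty) (half : ∀ x ∈ S, Ccw o b x) : ∃ s ∈ S, ∀ x ∈ S, x ≠ s → Ccw o s x :=
  exists_first_ccw_of_halfPlane hne half fun x hx y hy =>
    C.ccw_or_ccw ho (hS hx) (hS hy) (half x hx).ne_outer (half y hy).ne_outer

theorem clearFan₂₇ (C : Config x0 A B a f) (hlt : a.1 < (f 7).1) : ClearFan (A ∪ B) a f 2 7 where
  apex_mem := Finset.mem_union_left B C.mem₀
  mem k h2k hk7 := C.mem_union (Finset.mem_Icc.2 ⟨by lia, hk7⟩)
  fan := by
    have right_of_apex {x : Pt} (hx : x ∈ B) : a.1 < x.1 := C.apex_lt.trans (C.right x hx)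
    refine .of_succ (fun i h2i hi7 => ?_) fun i h2i => C.turn i (by lia)
    interval_cases i
    exacts [right_of_apex C.mem₂, right_of_apex C.mem₃, C.lt₄, right_of_apex C.mem₅,
      right_of_apex C.mem₆, hlt]
  gap k h2k := C.gap k (by lia)

theorem exists_next_cw (C : Config x0 A B a f) (hz : z ∈ A ∪ B) (hz₇ : Ccw a z (f 7))
    (hlt_z : a.1 < z.1) (hlt₇ : a.1 < (f 7).1) :
    ∃ y ∈ A ∪ B, Ccw a y (f 7) ∧ a.1 < y.1 ∧
      ∀ x ∈ A ∪ B, x ∈ cone a (f 7) y → x = a ∨ x = f 7 ∨ x = y := by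
  classical
  have h₀P : a ∈ A ∪ B := Finset.mem_union_left B C.mem₀
  let T := (A ∪ B).filter (Ccw a · (f 7))
  obtain ⟨y, hyT, first⟩ := C.exists_first_cw (S := T) (Finset.filter_subset _ _) h₀P
    ⟨z, Finset.mem_filter.2 ⟨hz, hz₇⟩⟩ fun x hx => (Finset.mem_filter.1 hx).2
  obtain ⟨hy, hy₇⟩ := Finset.mem_filter.1 hyT
  refine ⟨y, hy, hy₇, ?_, fun x hx h => ?_⟩
  · by_cases hzy : z = y
    · exact hzy ▸ hlt_z
    · exact hz₇.fst_lt_of_between hy₇ (first z (Finset.mem_filter.2 ⟨hz, hz₇⟩) hzy) hlt₇ hlt_z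
  · by_contra! hne
    refine notMem_cone.2 ?_ h
    exact (C.ccw_or_ccw h₀P (Finset.mem_union_left B C.mem₇) hx hz₇.ne_outer hne.1.symm
      hne.2.1.symm).imp_right fun hx₇ => first x (Finset.mem_filter.2 ⟨hx, hx₇⟩) hne.2.2

theorem notMem_core₈ (C : Config x0 A B a f) (F : ClearFan (A ∪ B) a f 2 8)
    (hlt : a.1 < (f 7).1) : f 8 ∉ core a f := by
  rintro (h | ⟨k, ⟨h1k, hk7⟩, h⟩)
  · exact C.ne_of_mem C.mem₀ (C.mem₈ F hlt) h.symm
  · rcases h1k.eq_or_lt with rfl | h1k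
    exacts [C.ne_of_mem C.mem₁ (C.mem₈ F hlt) h, (F.fan.ccw (by lia)).ne_right h.symm]

theorem ccw_eight_of_notMem_core (C : Config x0 A B a f) (F : ClearFan (A ∪ B) a f 2 8)
    (hlt : a.1 < (f 7).1) (hz : z ∈ A ∪ B) (hzc : z ∉ core a f) (hz₈ : z ≠ f 8) :
    Ccw a z (f 8) := by
  have hgap : z ∉ cone a (f 7) (f 8) := fun h => by
    rcases F.gap 7 (by decide) (by decide) z hz h with h | h | h
    exacts [ne_apex_of_notMem_core hzc h, ne_of_notMem_core hzc (by decide) h, hz₈ h]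
  exact (notMem_cone.1 hgap).resolve_left
    (C.ccw_of_notMem_core (C.ccw_one_seven F hlt) hz hzc).2.not_swap

theorem eq_of_mem_core (F : ClearFan (A ∪ B) a f 2 8) (hz : z ∈ core a f)
    (h : 0 ≤ orient (f 7) a z) : z = a ∨ z = f 1 ∨ z = f 7 := by
  rcases hz with rfl | ⟨k, ⟨h1k, hk7⟩, rfl⟩
  · exact .inl rfl
  rcases h1k.eq_or_lt with rfl | h1k
  · exact .inr (.inl rfl)
  rcases hk7.eq_or_lt with rfl | hk7
  · exact .inr (.inr rfl)
  have hk : Ccw a (f 7) (f k) := F.fan h1k hk7 (by decide)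
  exact absurd h hk.rotate.orient_neg.not_ge

theorem mem_right_of_orient_nonneg (C : Config x0 A B a f) (F : ClearFan (A ∪ B) a f 2 8)
    (hlt : a.1 < (f 7).1) (hs : s ∈ A) (hsc : s ∉ core a f)
    (first : ∀ x ∈ A, x ∉ core a f → x ≠ s → Ccw (f 1) x s)
    (hz : z ∈ A ∪ B) (hz₀ : z ≠ a) (hz₁ : z ≠ f 1) (hzₛ : z ≠ s) (hz₇ : z ≠ f 7)
    (h₁ₛz : 0 ≤ orient (f 1) s z) (h₇₀z : 0 ≤ orient (f 7) a z) :
    z ∈ B ∧ z ∉ core a f ∧ Ccw a s z ∧ Ccw (f 1) s z := by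
  have h₁₇ := C.ccw_one_seven F hlt
  have hsP : s ∈ A ∪ B := Finset.mem_union_left B hs
  obtain ⟨h₁ₛ, -⟩ := C.ccw_of_notMem_core h₁₇ hsP hsc
  have hzc : z ∉ core a f := fun hzc => by
    rcases eq_of_mem_core F hzc h₇₀z with h | h | h
    exacts [hz₀ h, hz₁ h, hz₇ h]
  have not_ccw : ¬ Ccw (f 1) z s := fun h => h.orient_neg.not_ge h₁ₛz
  have hzB : z ∈ B := (Finset.mem_union.1 hz).resolve_left fun hzA => not_ccw (first z hzA hzc hzₛ)
  have hₛz : Ccw a s z := (C.ccw_or_ccw (Finset.mem_union_left B C.mem₀) hsP hz h₁ₛ.ne_outer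
    hz₀.symm hzₛ.symm).resolve_right fun hzs =>
      not_ccw (.of_gt_of_gt_of_gt hzs (C.ccw_of_notMem_core h₁₇ hz hzc).1 h₁ₛ C.apex_lt
        (C.left _ hs) (C.right _ hzB) (C.left _ C.mem₁))
  exact ⟨hzB, hzc, hₛz, (C.ccw_or_ccw (Finset.mem_union_left B C.mem₁) hsP hz h₁ₛ.ne_right
    hz₁.symm hzₛ.symm).resolve_right not_ccw⟩

/-- Otherwise `a`, `f 1`, `s`, a suitable point of `B`, and `f 7` would span a 5-hole. -/
theorem not_ccw_one_eight_of_first_cw (C : Config x0 A B a f) (F : ClearFan (A ∪ B) a f 2 8)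
    (hlt : a.1 < (f 7).1) (hs : s ∈ A) (hsc : s ∉ core a f)
    (first : ∀ x ∈ A, x ∉ core a f → x ≠ s → Ccw (f 1) x s) : ¬ Ccw (f 1) s (f 8) := by
  classical
  intro hs₈
  have h₁₇ := C.ccw_one_seven F hlt
  have hsP : s ∈ A ∪ B := Finset.mem_union_left B hs
  obtain ⟨h₁ₛ, hₛ₇⟩ := C.ccw_of_notMem_core h₁₇ hsP hsc
  let W := B.filter fun z => z ∉ core a f ∧ Ccw a s z ∧ Ccw (f 1) s z
  have hW : W ⊆ A ∪ B := (B.filter_subset _).trans Finset.subset_union_right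
  have h₈W : f 8 ∈ W := Finset.mem_filter.2 ⟨C.mem₈ F hlt, C.notMem_core₈ F hlt,
    C.ccw_eight_of_notMem_core F hlt hsP hsc (C.ne_of_mem hs (C.mem₈ F hlt)), hs₈⟩
  obtain ⟨w, hwW, firstW⟩ := C.exists_first_ccw hW (Finset.mem_union_left B C.mem₇) ⟨_, h₈W⟩
    fun z hz => (C.ccw_of_notMem_core h₁₇ (hW hz) (Finset.mem_filter.1 hz).2.1).2.rotate.rotate
  obtain ⟨hwB, hwc, hₛw, h₁ₛw⟩ := Finset.mem_filter.1 hwW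
  obtain ⟨h₁w, hw₇⟩ := C.ccw_of_notMem_core h₁₇ (hW hwW) hwc
  have pentagon : ConvexPentagon a (f 1) s w (f 7) := .of_star h₁ₛ h₁w h₁₇ hₛw hₛ₇ hw₇ h₁ₛw
    (.of_gt_of_gt_of_gt hw₇ hₛw hₛ₇ C.apex_lt (C.left _ C.mem₇) (C.right _ hwB) (C.left _ hs))
  refine C.noHole (pentagon.exists_dividedFiveHole ?_ C.mem₀ (by simp) hwB (by simp) ?_)
  · simp [Finset.insert_subset_iff, hs, hwB, C.mem₀, C.mem₁, C.mem₇]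
  intro z hz hzHull
  obtain ⟨-, h₁ₛz, -, hw₇z, h₇₀z⟩ := pentagon.orient_edges_nonneg hzHull
  by_contra hne
  simp only [Finset.mem_insert, Finset.mem_singleton, not_or] at hne
  obtain ⟨hz₀, hz₁, hzₛ, hzw, hz₇⟩ := hne
  have hzW : z ∈ W := Finset.mem_filter.2
    (C.mem_right_of_orient_nonneg F hlt hs hsc first hz hz₀ hz₁ hzₛ hz₇ h₁ₛz h₇₀z)
  exact hw₇z.not_gt (firstW z hzW hzw).rotate.orient_neg

theorem core_subset_insert_ccw (C : Config x0 A B a f) (F : ClearFan (A ∪ B) a f 2 8)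
    (hlt : a.1 < (f 7).1) : core a f ⊆ insert (f 1) {z | Ccw (f 1) (f 8) z} := by
  rintro _ (rfl | ⟨k, ⟨h1k, hk7⟩, rfl⟩)
  · exact .inr (C.ccw_one_eight F hlt).rotate
  rcases h1k.eq_or_lt with rfl | h1k
  exacts [.inl rfl, .inr (C.ccw_one_eight_of_le F hlt (by lia))]

end Config

namespace MinimalConfig

theorem congr (M : MinimalConfig x0 A B a f) (h : ∀ k, 1 ≤ k → k ≤ 7 → g k = f k) :
    MinimalConfig x0 A B a g :=
  ⟨M.toConfig.congr h, core_congr h ▸ M.extra_left, core_congr h ▸ M.extra_right,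
    core_congr h ▸ M.minimal⟩

theorem exists_ccw_one_eight (M : MinimalConfig x0 A B a f) (F : ClearFan (A ∪ B) a f 2 8)
    (hlt : a.1 < (f 7).1) : ∃ s ∈ A, s ∉ core a f ∧ Ccw (f 1) (f 8) s := by
  classical
  by_contra! h
  have half (x : Pt) (hx : x ∈ A.filter (· ∉ core a f)) : Ccw (f 1) x (f 8) := by
    obtain ⟨hxA, hxc⟩ := Finset.mem_filter.1 hx
    exact (M.ccw_or_ccw (Finset.mem_union_left B M.mem₁) (Finset.mem_union_left B hxA)
      (F.mem 8 (by decide) le_rfl) (ne_of_notMem_core hxc (by decide)).symm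
      (M.ne_of_mem M.mem₁ (M.mem₈ F hlt)) (M.ne_of_mem hxA (M.mem₈ F hlt))).resolve_right
        (h x hxA hxc)
  obtain ⟨z, hz, hzc⟩ := M.extra_left
  obtain ⟨s, hs, first⟩ := M.exists_first_cw
    ((A.filter_subset _).trans Finset.subset_union_left) (Finset.mem_union_left B M.mem₁)
    ⟨z, Finset.mem_filter.2 ⟨hz, hzc⟩⟩ half
  exact M.not_ccw_one_eight_of_first_cw F hlt (Finset.mem_filter.1 hs).1 (Finset.mem_filter.1 hs).2
    (fun x hxA hxc => first x (Finset.mem_filter.2 ⟨hxA, hxc⟩)) (half s hs)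

theorem ccw_one_eight_of_notMem_core (M : MinimalConfig x0 A B a f)
    (F : ClearFan (A ∪ B) a f 2 8) (hlt : a.1 < (f 7).1) (hz : z ∈ A ∪ B) (hzc : z ∉ core a f)
    (hz₈ : z ≠ f 8) : Ccw (f 1) (f 8) z := by
  have h₈ := M.mem₈ F hlt
  have core_nonneg : core a f ⊆ {z | 0 ≤ orient (f 1) (f 8) z} := fun z hz => by
    rcases M.core_subset_insert_ccw F hlt hz with rfl | (hz : Ccw _ _ _)
    exacts [(orient_self_outer _ _).ge, hz.le]
  obtain ⟨s, hs, hsc, h₁₈ₛ⟩ := M.exists_ccw_one_eight F hlt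
  have h₁₈z : 0 ≤ orient (f 1) (f 8) z :=
    M.minimal _ (convex_setOf_orient_nonneg _ _) core_nonneg ⟨s, hs, h₁₈ₛ.le, hsc⟩
      ⟨f 8, h₈, (orient_self_right _ _).ge, M.notMem_core₈ F hlt⟩ z hz
  exact (M.ccw_or_ccw (Finset.mem_union_left B M.mem₁) (Finset.mem_union_right A h₈) hz
    (M.ne_of_mem M.mem₁ h₈) (ne_of_notMem_core hzc (by decide)).symm hz₈.symm).resolve_right
      fun h => h.orient_neg.not_ge h₁₈z

theorem eq_eight_of_mem_right (M : MinimalConfig x0 A B a f) (F : ClearFan (A ∪ B) a f 2 8)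
    (hlt : a.1 < (f 7).1) (hz : z ∈ B) (hzc : z ∉ core a f) : z = f 8 := by
  by_contra hz₈
  obtain ⟨s, hs, hsc, h₁₈ₛ⟩ := M.exists_ccw_one_eight F hlt
  have h₁₈z := M.ccw_one_eight_of_notMem_core F hlt (Finset.mem_union_right A hz) hzc hz₈
  rcases M.minimal _ (convex_insert_setOf_orient_pos _ _)
    (M.core_subset_insert_ccw F hlt) ⟨s, hs, .inr h₁₈ₛ, hsc⟩
    ⟨z, hz, .inr h₁₈z, hzc⟩ (f 8) (F.mem 8 (by decide) le_rfl) with h | h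
  exacts [M.ne_of_mem M.mem₁ (M.mem₈ F hlt) h.symm, h.ne_right rfl]

theorem eq_of_mem_cone_eight (M : MinimalConfig x0 A B a f) (F : ClearFan (A ∪ B) a f 2 8)
    (hlt : a.1 < (f 7).1) (hs : s ∈ A) (hsc : s ∉ core a f)
    (first : ∀ x ∈ A, x ∉ core a f → x ≠ s → Ccw a x s) (hz : z ∈ A ∪ B)
    (h : z ∈ cone a (f 8) s) : z = a ∨ z = f 8 ∨ z = s := by
  by_contra! hne
  refine notMem_cone.2 ?_ h
  by_cases hzc : z ∈ core a f
  · rcases hzc with rfl | ⟨k, ⟨h1k, hk7⟩, rfl⟩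
    · exact absurd rfl hne.1
    rcases h1k.eq_or_lt with rfl | h1k
    · have h₁₇ := M.ccw_one_seven F hlt
      exact .inr (M.ccw_of_notMem_core h₁₇ (Finset.mem_union_left B hs) hsc).1
    · exact .inl (F.fan.ccw (by lia))
  · rcases Finset.mem_union.1 hz with hzA | hzB
    exacts [.inr (first z hzA hzc hne.2.2), absurd (M.eq_eight_of_mem_right F hlt hzB hzc) hne.2.1]

theorem not_ccw_four_of_first_cw (M : MinimalConfig x0 A B a f) (F : ClearFan (A ∪ B) a f 2 8)
    (hlt : a.1 < (f 7).1) (hs : s ∈ A) (hsc : s ∉ core a f)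
    (first : ∀ x ∈ A, x ∉ core a f → x ≠ s → Ccw a x s) : ¬ Ccw a s (f 4) := by
  intro hₛ₄
  have hsP : s ∈ A ∪ B := Finset.mem_union_left B hs
  have hs₈ : s ≠ f 8 := M.ne_of_mem hs (M.mem₈ F hlt)
  let g := Function.update f 9 s
  have hg (k : ℕ) (hk : k ≤ 8) : g k = f k := Function.update_of_ne (by lia : k ≠ 9) _ _
  have hg₉ : g 9 = s := Function.update_self 9 s f
  have Fg : ClearFan (A ∪ B) a g 2 8 := F.congr fun k _ => hg k
  have hlt_g : a.1 < (g 7).1 := by rwa [hg 7 (by decide)]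
  refine (M.toConfig.congr fun k _ hk7 => hg k (by lia)).not_clearFan_four_nine Fg hlt_g ?_ ?_
  · rw [hg 1 (by decide), hg 8 le_rfl, hg₉]
    exact M.ccw_one_eight_of_notMem_core F hlt hsP hsc hs₈
  · refine (Fg.mono 4 8).snoc ?_ ?_ ?_ ?_
    · rwa [hg₉]
    · rw [hg 8 le_rfl, hg₉]
      exact M.ccw_eight_of_notMem_core F hlt hsP hsc hs₈
    · rwa [hg 4 (by decide), hg₉]
    · rw [hg 8 le_rfl, hg₉]
      exact fun z => M.eq_of_mem_cone_eight F hlt hs hsc first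

theorem eq_of_mem_cone_one (M : MinimalConfig x0 A B a f) (F : ClearFan (A ∪ B) a f 2 8)
    (hlt : a.1 < (f 7).1) (hs : s ∈ A) (hsc : s ∉ core a f)
    (first : ∀ x ∈ A, x ∉ core a f → x ≠ s → Ccw a s x) (hz : z ∈ A ∪ B)
    (h : z ∈ cone a s (f 1)) : z = a ∨ z = s ∨ z = f 1 := by
  by_contra! hne
  have hsP : s ∈ A ∪ B := Finset.mem_union_left B hs
  have h₁₇ := M.ccw_one_seven F hlt
  obtain ⟨h₁ₛ, hₛ₇⟩ := M.ccw_of_notMem_core h₁₇ hsP hsc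
  by_cases hzc : z ∈ core a f
  · have hzₛ : Ccw a z s := (M.ccw_or_ccw (Finset.mem_union_left B M.mem₀) hsP hz h₁ₛ.ne_outer
      hne.1.symm hne.2.1.symm).resolve_left fun h' => notMem_cone.2 (.inl h') h
    rcases hzc with rfl | ⟨k, ⟨h1k, hk7⟩, rfl⟩
    · exact hne.1 rfl
    rcases h1k.eq_or_lt with rfl | h1k
    · exact hne.2.2 rfl
    rcases hk7.eq_or_lt with rfl | hk7
    · exact hₛ₇.not_swap hzₛ
    · exact notMem_cone.2
        (.inr (.surround_right hₛ₇ (F.fan.ccw (by lia)) hzₛ h₁ₛ h₁₇)) h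
  · refine notMem_cone.2 (.inl ?_) h
    rcases Finset.mem_union.1 hz with hzA | hzB
    · exact first z hzA hzc hne.2.1
    · obtain rfl := M.eq_eight_of_mem_right F hlt hzB hzc
      exact M.ccw_eight_of_notMem_core F hlt hsP hsc (M.ne_of_mem hs hzB)

theorem not_ccw_four_of_first_ccw (M : MinimalConfig x0 A B a f) (F : ClearFan (A ∪ B) a f 2 8)
    (hlt : a.1 < (f 7).1) (hs : s ∈ A) (hsc : s ∉ core a f)
    (first : ∀ x ∈ A, x ∉ core a f → x ≠ s → Ccw a s x) : ¬ Ccw a (f 4) s := by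
  intro h₄ₛ
  have hsP : s ∈ A ∪ B := Finset.mem_union_left B hs
  let g := Function.update f 0 s
  have hg (k : ℕ) (hk : 1 ≤ k) : g k = f k := Function.update_of_ne (by lia : k ≠ 0) _ _
  have hg₀ : g 0 = s := Function.update_self 0 s f
  have Cg : Config x0 A B a g := M.toConfig.congr fun k h1k _ => hg k h1k
  have Fg : ClearFan (A ∪ B) a g 2 8 := F.congr fun k h2k _ => hg k (by lia)
  have hlt_g : a.1 < (g 7).1 := by rwa [hg 7 (by decide)]
  refine Cg.not_clearFan_zero_four Fg hlt_g ?_ ?_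
  · rw [hg 1 le_rfl, hg 8 (by decide), hg₀]
    exact M.ccw_one_eight_of_notMem_core F hlt hsP hsc (M.ne_of_mem hs (M.mem₈ F hlt))
  · refine (Cg.clearFan₁₄ Fg).cons ?_ ?_ ?_ ?_
    · rwa [hg₀]
    · rw [zero_add, hg 1 le_rfl, hg₀]
      exact (M.ccw_of_notMem_core (M.ccw_one_seven F hlt) hsP hsc).1
    · rwa [hg 4 (by decide), hg₀]
    · rw [zero_add, hg 1 le_rfl, hg₀]
      exact fun z => M.eq_of_mem_cone_one F hlt hs hsc first

theorem not_clearFan (M : MinimalConfig x0 A B a f) (hlt : a.1 < (f 7).1) :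
    ¬ ClearFan (A ∪ B) a f 2 8 := by
  classical
  intro F
  let S := A.filter (· ∉ core a f)
  have hS : S ⊆ A ∪ B := (A.filter_subset _).trans Finset.subset_union_left
  have h₀P : a ∈ A ∪ B := Finset.mem_union_left B M.mem₀
  have sector (x : Pt) (hx : x ∈ S) : Ccw a (f 1) x ∧ Ccw a x (f 7) :=
    M.ccw_of_notMem_core (M.ccw_one_seven F hlt) (hS hx) (Finset.mem_filter.1 hx).2
  obtain ⟨z, hz, hzc⟩ := M.extra_left
  have hne : S.Nonempty := ⟨z, Finset.mem_filter.2 ⟨hz, hzc⟩⟩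
  obtain ⟨r, hr, firstR⟩ := M.exists_first_cw hS h₀P hne fun x hx => (sector x hx).2
  obtain ⟨s, hs, firstS⟩ := M.exists_first_ccw hS h₀P hne fun x hx => (sector x hx).1
  obtain ⟨hrA, hrc⟩ := Finset.mem_filter.1 hr
  obtain ⟨hsA, hsc⟩ := Finset.mem_filter.1 hs
  have not_ccw_r := M.not_ccw_four_of_first_cw F hlt hrA hrc fun x hxA hxc =>
    firstR x (Finset.mem_filter.2 ⟨hxA, hxc⟩)
  have not_ccw_s := M.not_ccw_four_of_first_ccw F hlt hsA hsc fun x hxA hxc =>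
    firstS x (Finset.mem_filter.2 ⟨hxA, hxc⟩)
  have h₄ᵣ : Ccw a (f 4) r := (M.ccw_or_ccw h₀P (hS hr) (F.mem 4 (by decide) (by decide))
    (sector r hr).1.ne_outer M.ccw₄₁.ne_left (ne_of_notMem_core hrc (by decide))).resolve_left
      not_ccw_r
  by_cases hrs : r = s
  · exact not_ccw_s (hrs ▸ h₄ᵣ)
  · exact not_ccw_s (.between' h₄ᵣ M.ccw₄₁ (sector s hs).1 (firstS r hr hrs) (sector r hr).1)

theorem exists_clearFan (M : MinimalConfig x0 A B a f) (hz : z ∈ B) (hzc : z ∉ core a f)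
    (hz₄ : Ccw a z (f 4)) :
    ∃ g, MinimalConfig x0 A B a g ∧ a.1 < (g 7).1 ∧ ClearFan (A ∪ B) a g 2 8 := by
  have hzP : z ∈ A ∪ B := Finset.mem_union_right A hz
  have hlt_z : a.1 < z.1 := M.apex_lt.trans (M.right z hz)
  have hz₇ : Ccw a z (f 7) := (notMem_cone.1 fun h =>
    hzc (M.mem_core_of_mem_cone (i := 4) (j := 7) hzP h)).resolve_left hz₄.not_swap
  have hlt₇ : a.1 < (f 7).1 := hz₄.fst_lt_of_between M.ccw₇₄ hz₇ M.lt₄ hlt_z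
  have F := M.clearFan₂₇ hlt₇
  obtain ⟨y, hy, hy₇, hlt_y, gap⟩ := M.exists_next_cw hzP hz₇ hlt_z hlt₇
  let g := Function.update f 8 y
  have hg (k : ℕ) (hk : k ≤ 7) : g k = f k := Function.update_of_ne (by lia : k ≠ 8) _ _
  have hg₈ : g 8 = y := Function.update_self 8 y f
  refine ⟨g, M.congr fun k _ => hg k, by rwa [hg 7 le_rfl],
    (F.congr fun k _ => hg k).snoc ?_ ?_ ?_ ?_⟩
  · rwa [hg₈]
  · rwa [hg 7 le_rfl, hg₈]
  · rw [hg 2 (by decide), hg₈]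
    exact .trans_of_fst_lt (M.apex_lt.trans (M.right _ M.mem₂)) hlt₇ hlt_y F.fan.ccw hy₇
  · rwa [hg 7 le_rfl, hg₈]

theorem not_ccw_four (M : MinimalConfig x0 A B a f) (hz : z ∈ B) (hzc : z ∉ core a f) :
    ¬ Ccw a z (f 4) := fun hz₄ => by
  obtain ⟨g, Mg, hlt, F⟩ := M.exists_clearFan hz hzc hz₄
  exact Mg.not_clearFan hlt F

end MinimalConfig

end Core

/-! ### Reduction to minimal configurations -/

section Reflection

variable {x0 : ℝ} {A B H S T : Finset Pt} {a u v x y z : Pt} {f : ℕ → Pt}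

/-- The reflection in the horizontal axis. It exchanges the two orientations and preserves the
order of first coordinates. -/
def reflect : Pt ≃ₗ[ℝ] Pt := (LinearEquiv.refl ℝ ℝ).prodCongr (LinearEquiv.neg ℝ)

theorem reflect_reflect (x : Pt) : reflect (reflect x) = x := Prod.ext rfl (neg_neg x.2)

theorem orient_reflect (x y z : Pt) :
    orient (reflect x) (reflect y) (reflect z) = orient x z y := by
  change (y.1 - x.1) * (-z.2 - -x.2) - (-y.2 - -x.2) * (z.1 - x.1) = _
  rw [orient_def]
  ring

theorem ccw_reflect : Ccw (reflect x) (reflect y) (reflect z) ↔ Ccw x z y := by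
  rw [Ccw, orient_reflect, Ccw]

theorem mem_cone_reflect :
    z ∈ cone (reflect a) (reflect u) (reflect v) ↔ reflect z ∈ cone a v u := by
  obtain ⟨z, rfl⟩ : ∃ w, reflect w = z := ⟨reflect z, reflect_reflect z⟩
  simp only [cone, Set.mem_ofPred_eq, orient_reflect, reflect_reflect]
  exact and_comm

/-- The image of a finite set under `reflect`. -/
def mirror (S : Finset Pt) : Finset Pt := S.map reflect.toEquiv.toEmbedding

theorem mem_mirror : x ∈ mirror S ↔ reflect x ∈ S := Finset.mem_map_equiv

theorem reflect_mem_mirror : reflect x ∈ mirror S ↔ x ∈ S := by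
  rw [mem_mirror, reflect_reflect]

theorem coe_mirror : (mirror S : Set Pt) = reflect '' S := Finset.coe_map _ _

theorem mirror_union : mirror (S ∪ T) = mirror S ∪ mirror T := Finset.map_union _ _

theorem mirror_mirror : mirror (mirror S) = S := by
  ext x
  rw [mem_mirror, reflect_mem_mirror]

theorem convexHull_reflect_image (S : Set Pt) :
    convexHull ℝ (reflect '' S) = reflect '' convexHull ℝ S :=
  (reflect.toLinearMap.image_convexHull S).symm

theorem isKHole_mirror {k : ℕ} (h : IsKHole k S H) : IsKHole k (mirror S) (mirror H) := by
  obtain ⟨subset, card, convexPos, empty⟩ := h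
  refine ⟨Finset.map_subset_map.2 subset, (Finset.card_map _).trans card, ?_, fun p hp hpH => ?_⟩
  · rw [coe_mirror]
    rintro _ ⟨p, hp, rfl⟩
    rw [← Set.image_singleton, ← Set.image_sdiff reflect.injective, convexHull_reflect_image,
      reflect.injective.mem_set_image]
    exact convexPos p hp
  · rw [coe_mirror, convexHull_reflect_image, ← reflect_reflect p, reflect.injective.mem_set_image]
    exact empty _ (mem_mirror.1 hp) fun h => hpH (mem_mirror.2 h)

theorem dividedFiveHole_mirror (h : DividedFiveHole A B H) :
    DividedFiveHole (mirror A) (mirror B) (mirror H) := by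
  obtain ⟨hole, ⟨u, huH, huA⟩, v, hvH, hvB⟩ := h
  exact ⟨mirror_union ▸ isKHole_mirror hole,
    ⟨reflect u, reflect_mem_mirror.2 huH, reflect_mem_mirror.2 huA⟩,
    ⟨reflect v, reflect_mem_mirror.2 hvH, reflect_mem_mirror.2 hvB⟩⟩

theorem mem_core_reflect :
    z ∈ core (reflect a) (fun i => reflect (f (8 - i))) ↔ reflect z ∈ core a f := by
  have reflect_eq_iff {x : Pt} : reflect x = z ↔ x = reflect z :=
    ⟨fun h => h ▸ (reflect_reflect x).symm, fun h => h ▸ reflect_reflect z⟩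
  simp only [core, Set.mem_insert_iff, Set.mem_image, Set.mem_Icc, reflect_eq_iff,
    eq_comm (a := z), eq_comm (a := reflect z) (b := a)]
  refine or_congr_right ⟨?_, ?_⟩
  · rintro ⟨k, hk, h⟩
    exact ⟨8 - k, by lia, h⟩
  · rintro ⟨k, hk, h⟩
    exact ⟨8 - k, by lia, by rwa [Nat.sub_sub_self (by lia)]⟩

theorem Config.mirror (C : Config x0 A B a f) :
    Config x0 (mirror A) (mirror B) (reflect a) fun i => reflect (f (8 - i)) where
  left z hz := C.left (reflect z) (mem_mirror.1 hz)
  right z hz := C.right (reflect z) (mem_mirror.1 hz)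
  gen x hx y hy z hz hxy hxz hyz := by
    rw [← mirror_union, mem_mirror] at hx hy hz
    rw [← orient_reflect]
    exact C.gen _ hx _ hz _ hy (reflect.injective.ne hxz) (reflect.injective.ne hxy)
      (reflect.injective.ne hyz.symm)
  mem₀ := reflect_mem_mirror.2 C.mem₀
  mem₁ := reflect_mem_mirror.2 C.mem₇
  mem₂ := reflect_mem_mirror.2 C.mem₆
  mem₃ := reflect_mem_mirror.2 C.mem₅
  mem₄ := reflect_mem_mirror.2 C.mem₄
  mem₅ := reflect_mem_mirror.2 C.mem₃
  mem₆ := reflect_mem_mirror.2 C.mem₂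
  mem₇ := reflect_mem_mirror.2 C.mem₁
  turn k h1k hk7 := by
    have h := C.turn (8 - (k + 1)) (by lia) (by lia)
    rw [show 8 - (k + 1) + 1 = 8 - k by lia] at h
    exact ccw_reflect.2 h
  ccw₄₁ := ccw_reflect.2 C.ccw₇₄
  ccw₇₄ := ccw_reflect.2 C.ccw₄₁
  lt₄ := C.lt₄
  gap k h1k hk7 z hz h := by
    rw [← mirror_union, mem_mirror] at hz
    have h' := C.gap (8 - (k + 1)) (by lia) (by lia) _ hz
    rw [show 8 - (k + 1) + 1 = 8 - k by lia] at h'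
    rw [← reflect_reflect z]
    rcases h' (mem_cone_reflect.1 h) with h | h | h
    exacts [.inl (congrArg _ h), .inr (.inr (congrArg _ h)), .inr (.inl (congrArg _ h))]
  inner x hx hlt u hu v hv w hw huv hvw hwu := by
    rw [mem_mirror] at hx hu hv hw
    rw [← ccw_reflect] at huv hvw hwu
    exact C.inner _ hx hlt _ hu _ hw _ hv hwu hvw huv
  noHole := fun ⟨H, hH⟩ => C.noHole
    ⟨_, mirror_mirror (S := A) ▸ mirror_mirror (S := B) ▸ dividedFiveHole_mirror hH⟩

theorem MinimalConfig.mirror (M : MinimalConfig x0 A B a f) :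
    MinimalConfig x0 (mirror A) (mirror B) (reflect a) fun i => reflect (f (8 - i)) where
  toConfig := M.toConfig.mirror
  extra_left := by
    obtain ⟨z, hz, hzc⟩ := M.extra_left
    exact ⟨reflect z, reflect_mem_mirror.2 hz, by rwa [mem_core_reflect, reflect_reflect]⟩
  extra_right := by
    obtain ⟨z, hz, hzc⟩ := M.extra_right
    exact ⟨reflect z, reflect_mem_mirror.2 hz, by rwa [mem_core_reflect, reflect_reflect]⟩
  minimal K hK hcore := by
    rintro ⟨x, hxA, hxK, hxc⟩ ⟨y, hyB, hyK, hyc⟩ z hz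
    rw [← mirror_union, mem_mirror] at hz
    rw [mem_core_reflect] at hxc hyc
    rw [← reflect_reflect x] at hxK
    rw [← reflect_reflect y] at hyK
    rw [← reflect_reflect z]
    exact M.minimal (reflect ⁻¹' K) (hK.linear_preimage reflect.toLinearMap)
      (fun w hw => hcore (mem_core_reflect.2 (by rwa [reflect_reflect])))
      ⟨_, mem_mirror.1 hxA, hxK, hxc⟩ ⟨_, mem_mirror.1 hyB, hyK, hyc⟩ _ hz

theorem MinimalConfig.false (M : MinimalConfig x0 A B a f) : False := by
  obtain ⟨z, hz, hzc⟩ := M.extra_right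
  rcases M.ccw_or_ccw (Finset.mem_union_left B M.mem₀) (Finset.mem_union_right A hz)
    (Finset.mem_union_left B M.mem₄) (ne_apex_of_notMem_core hzc).symm M.ccw₄₁.ne_left
    (ne_of_notMem_core hzc (by decide)) with h | h
  · exact M.not_ccw_four hz hzc h
  · exact M.mirror.not_ccw_four (reflect_mem_mirror.2 hz)
      (by rwa [mem_core_reflect, reflect_reflect]) (ccw_reflect.2 h)

end Reflection

section Existence

variable {x0 : ℝ} {A B : Finset Pt} {a : Pt} {f : ℕ → Pt}

open scoped Classical in
theorem dividedFiveHole_of_filter {K : Set Pt} (hK : Convex ℝ K) {H : Finset Pt}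
    (h : DividedFiveHole (A.filter (· ∈ K)) (B.filter (· ∈ K)) H) : DividedFiveHole A B H := by
  obtain ⟨⟨subset, card, convexPos, empty⟩, ⟨u, huH, huA⟩, v, hvH, hvB⟩ := h
  rw [← Finset.filter_union] at subset empty
  refine ⟨⟨subset.trans (Finset.filter_subset _ _), card, convexPos, fun p hp hpH hpHull => ?_⟩,
    ⟨u, huH, Finset.mem_of_mem_filter u huA⟩, v, hvH, Finset.mem_of_mem_filter v hvB⟩
  have hull_subset : convexHull ℝ (H : Set Pt) ⊆ K :=
    convexHull_min (fun x hx => (Finset.mem_filter.1 (subset hx)).2) hK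
  exact empty p (Finset.mem_filter.2 ⟨hp, hull_subset hpHull⟩) hpH hpHull

open scoped Classical in
theorem Config.restrict (C : Config x0 A B a f) {K : Set Pt} (hK : Convex ℝ K)
    (hcore : core a f ⊆ K) : Config x0 (A.filter (· ∈ K)) (B.filter (· ∈ K)) a f where
  left z hz := C.left z (Finset.mem_of_mem_filter z hz)
  right z hz := C.right z (Finset.mem_of_mem_filter z hz)
  gen x hx y hy z hz := by
    rw [← Finset.filter_union] at hx hy hz
    exact C.gen x (Finset.mem_of_mem_filter x hx) y (Finset.mem_of_mem_filter y hy) z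
      (Finset.mem_of_mem_filter z hz)
  mem₀ := Finset.mem_filter.2 ⟨C.mem₀, hcore (.inl rfl)⟩
  mem₁ := Finset.mem_filter.2 ⟨C.mem₁, hcore (.inr ⟨1, by simp, rfl⟩)⟩
  mem₂ := Finset.mem_filter.2 ⟨C.mem₂, hcore (.inr ⟨2, by simp, rfl⟩)⟩
  mem₃ := Finset.mem_filter.2 ⟨C.mem₃, hcore (.inr ⟨3, by simp, rfl⟩)⟩
  mem₄ := Finset.mem_filter.2 ⟨C.mem₄, hcore (.inr ⟨4, by simp, rfl⟩)⟩
  mem₅ := Finset.mem_filter.2 ⟨C.mem₅, hcore (.inr ⟨5, by simp, rfl⟩)⟩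
  mem₆ := Finset.mem_filter.2 ⟨C.mem₆, hcore (.inr ⟨6, by simp, rfl⟩)⟩
  mem₇ := Finset.mem_filter.2 ⟨C.mem₇, hcore (.inr ⟨7, by simp, rfl⟩)⟩
  turn := C.turn
  ccw₄₁ := C.ccw₄₁
  ccw₇₄ := C.ccw₇₄
  lt₄ := C.lt₄
  gap k h1k hk7 z hz := by
    rw [← Finset.filter_union] at hz
    exact C.gap k h1k hk7 z (Finset.mem_of_mem_filter z hz)
  inner x hx hlt u hu v hv w hw :=
    C.inner x (Finset.mem_of_mem_filter x hx) hlt u (Finset.mem_of_mem_filter u hu) v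
      (Finset.mem_of_mem_filter v hv) w (Finset.mem_of_mem_filter w hw)
  noHole := fun ⟨H, hH⟩ => C.noHole ⟨H, dividedFiveHole_of_filter hK hH⟩

theorem Config.false (C : Config x0 A B a f) (extra_left : ∃ z ∈ A, z ∉ core a f)
    (extra_right : ∃ z ∈ B, z ∉ core a f) : False := by
  classical
  induction hn : (A ∪ B).card using Nat.strong_induction_on generalizing A B with
  | _ n ih =>
    refine MinimalConfig.false ⟨C, extra_left, extra_right, ?_⟩
    rintro K hK hcore ⟨x, hxA, hxK, hxc⟩ ⟨y, hyB, hyK, hyc⟩ z hz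
    by_contra hzK
    refine ih _ ?_ (C.restrict hK hcore) ⟨x, Finset.mem_filter.2 ⟨hxA, hxK⟩, hxc⟩
      ⟨y, Finset.mem_filter.2 ⟨hyB, hyK⟩, hyc⟩ rfl
    rw [← Finset.filter_union, ← hn]
    exact Finset.card_lt_card (Finset.filter_ssubset.2 ⟨z, hz, hzK⟩)

end Existence

/-! ### Wedges around `a*` -/

section Wedges

variable {x0 : ℝ} {A B : Finset Pt} {S : Set Pt} {a b c p : Pt} {f : ℕ → Pt} {k : ℕ}

theorem wedge_def (a p q : Pt) : Wedge a p q =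
    if orient a p q ≤ 0 then {x | orient a p x ≤ 0 ∧ 0 ≤ orient a q x}
    else {x | orient a p x ≤ 0 ∨ 0 ≤ orient a q x} := rfl

theorem wedge_eq_cone (h : Ccw a c p) : Wedge a p c = cone a p c := by
  simp only [wedge_def, h.orient_neg.le, if_true, cone, orient_swap a p, neg_nonneg]

theorem ccw_of_mem_wedge (ha : a ∈ interior (convexHull ℝ S)) (hpa : p ≠ a)
    (consec : S ∩ Wedge a p c ⊆ {a, p, c}) (hb : b ∈ Wedge a p c) (gen_b : orient a p b ≠ 0)
    (gen_c : p ≠ c → orient a p c ≠ 0) : Ccw a c p := by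
  rcases lt_trichotomy (orient a p c) 0 with hpc | hpc | hpc
  · exact ccw_swap_of_orient_neg hpc
  · obtain rfl : p = c := not_imp_comm.1 gen_c (not_not.2 hpc)
    rw [wedge_def, if_pos hpc.le] at hb
    exact absurd (le_antisymm hb.1 hb.2) gen_b
  · obtain ⟨x, hxS, hxp⟩ := exists_ccw_of_mem_interior_convexHull ha hpa
    have hx : x ∈ Wedge a p c := by
      rw [wedge_def, if_neg hpc.not_ge]
      exact .inl hxp.orient_neg.le
    rcases consec ⟨hxS, hx⟩ with h | h | h
    exacts [absurd h hxp.ne_left.symm, absurd h hxp.ne_right, absurd (h ▸ hxp) (Ccw.not_swap hpc)]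

theorem StarSetup.aStar_fst_lt_lbl (S : StarSetup x0 A) (hA : ∀ z ∈ A, z.1 < x0) (hk : 1 ≤ k)
    (hkt : k < S.t) (h : Ccw S.aStar (S.lbl (k + 1)) (S.lbl k)) :
    S.aStar.1 < (S.lbl k).1 := by
  by_contra! hle
  have t_le := S.t_le
  obtain ⟨u, huW, hu⟩ := (S.inter_iff k (Finset.mem_Icc.2 ⟨hk, by lia⟩)).2 hkt.le
  obtain ⟨v, hvW, hv⟩ := (S.inter_iff (k + 1) (Finset.mem_Icc.2 ⟨by lia, by lia⟩)).2 hkt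
  rw [Nat.add_sub_cancel, wedge_eq_cone h] at hvW
  have hlt : S.aStar.1 < (S.lbl (k + 1)).1 := by
    by_contra! hle'
    exact (fst_le_of_mem_cone h hle hle' hvW).not_gt (hv ▸ hA _ S.aStar_mem)
  -- the wedge contains the whole ray upwards from `v`, hence a point of `ℓ` above `u`
  have hv' : (v.1, max u.2 v.2 + 1) ∈ cone S.aStar (S.lbl k) (S.lbl (k + 1)) :=
    mem_cone_of_le_snd hle hlt.le hvW rfl
      ((le_max_right _ _).trans (le_add_of_nonneg_right zero_le_one))
  have above : max u.2 v.2 + 1 ≤ u.2 := S.ordered k (Finset.mem_Icc.2 ⟨hk, hkt.le⟩) (k + 1)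
    (Finset.mem_Icc.2 ⟨by lia, hkt⟩) (Nat.lt_succ_self k) u ⟨huW, hu⟩
    (v.1, max u.2 v.2 + 1) ⟨by rwa [Nat.add_sub_cancel, wedge_eq_cone h], hv⟩
  exact (((le_max_left _ _).trans_lt (lt_add_one _)).trans_le above).false

namespace StarSetup

theorem ccw_lbl (S : StarSetup x0 A) (gen : GenPos ↑(A ∪ B)) (hAB : Disjoint A B)
    (hk : k ∈ Finset.Icc 1 (A.card - 1)) (hb : b ∈ B) (hbW : b ∈ S.W k) :
    Ccw S.aStar (S.lbl k) (S.lbl (k - 1)) := by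
  obtain ⟨hp₀, hp⟩ := Finset.mem_erase.1 (S.lbl_mem (k - 1))
  obtain ⟨hc₀, hc⟩ := Finset.mem_erase.1 (S.lbl_mem k)
  have ha := Finset.mem_union_left B S.aStar_mem
  exact ccw_of_mem_wedge S.aStar_interior hp₀ (S.consec k hk) hbW
    (orient_ne_zero_of_genPos gen ha (Finset.mem_union_left B hp) (Finset.mem_union_right A hb)
      hp₀.symm (hAB.forall_ne_finset S.aStar_mem hb) (hAB.forall_ne_finset hp hb))
    (orient_ne_zero_of_genPos gen ha (Finset.mem_union_left B hp) (Finset.mem_union_left B hc)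
      hp₀.symm hc₀.symm)

theorem exists_ccw_of_w_eq_two (S : StarSetup x0 A) (gen : GenPos ↑(A ∪ B)) (hAB : Disjoint A B)
    (hw : S.w B k = 2) : ∃ x y, Ccw S.aStar y x ∧ (↑B : Set Pt) ∩ S.W k = {x, y} := by
  obtain ⟨x, y, hxy, hBW⟩ := Set.ncard_eq_two.1 hw
  have hx : x ∈ (↑B : Set Pt) ∩ S.W k := hBW ▸ .inl rfl
  have hy : y ∈ (↑B : Set Pt) ∩ S.W k := hBW ▸ .inr rfl
  rcases (orient_ne_zero_of_genPos gen (Finset.mem_union_left B S.aStar_mem)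
    (Finset.mem_union_right A hx.1) (Finset.mem_union_right A hy.1)
    (hAB.forall_ne_finset S.aStar_mem hx.1) (hAB.forall_ne_finset S.aStar_mem hy.1)
    hxy).lt_or_gt with h | h
  · exact ⟨x, y, ccw_swap_of_orient_neg h, hBW⟩
  · exact ⟨y, x, h, hBW.trans (Set.pair_comm x y)⟩

theorem ccw_of_mem_W (S : StarSetup x0 A) (gen : GenPos ↑(A ∪ B)) (hAB : Disjoint A B)
    (h : Ccw S.aStar (S.lbl k) (S.lbl (k - 1))) (hb : b ∈ B) (hbW : b ∈ S.W k) :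
    Ccw S.aStar b (S.lbl (k - 1)) ∧ Ccw S.aStar (S.lbl k) b := by
  obtain ⟨hp₀, hp⟩ := Finset.mem_erase.1 (S.lbl_mem (k - 1))
  obtain ⟨hc₀, hc⟩ := Finset.mem_erase.1 (S.lbl_mem k)
  have ha := Finset.mem_union_left B S.aStar_mem
  have hb' := Finset.mem_union_right A hb
  have ha_ne := hAB.forall_ne_finset S.aStar_mem hb
  rw [W, wedge_eq_cone h] at hbW
  exact ⟨hbW.1.lt_of_ne' (orient_ne_zero_of_genPos gen ha hb' (Finset.mem_union_left B hp) ha_ne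
      hp₀.symm (hAB.forall_ne_finset hp hb).symm),
    hbW.2.lt_of_ne' (orient_ne_zero_of_genPos gen ha (Finset.mem_union_left B hc) hb' hc₀.symm
      ha_ne (hAB.forall_ne_finset hc hb))⟩

theorem exists_clearFan (S : StarSetup x0 A) (gen : GenPos ↑(A ∪ B)) (hAB : Disjoint A B)
    (hk : k ∈ Finset.Icc 1 (A.card - 1)) (hw : S.w B k = 2) :
    ∃ g : ℕ → Pt, ClearFan (A ∪ B) S.aStar g 1 4 ∧ g 1 = S.lbl (k - 1) ∧ g 2 ∈ B ∧ g 3 ∈ B ∧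
      g 4 = S.lbl k := by
  obtain ⟨x, y, hyx, hBW⟩ := S.exists_ccw_of_w_eq_two gen hAB hw
  obtain ⟨hxB, hxW⟩ : x ∈ (↑B : Set Pt) ∩ S.W k := hBW ▸ .inl rfl
  obtain ⟨hyB, hyW⟩ : y ∈ (↑B : Set Pt) ∩ S.W k := hBW ▸ .inr rfl
  have turn := S.ccw_lbl gen hAB hk hxB hxW
  obtain ⟨hxp, hcx⟩ := S.ccw_of_mem_W gen hAB turn hxB hxW
  obtain ⟨hyp, hcy⟩ := S.ccw_of_mem_W gen hAB turn hyB hyW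
  have mem_lbl (j : ℕ) : S.lbl j ∈ A ∪ B :=
    Finset.mem_union_left B (Finset.mem_of_mem_erase (S.lbl_mem j))
  refine ⟨_, clearFan_of_two (Finset.mem_union_left B S.aStar_mem) (mem_lbl _)
    (Finset.mem_union_right A hxB) (Finset.mem_union_right A hyB) (mem_lbl _) turn hxp hcx hyp hcy
    hyx fun z hz hzc => ?_, rfl, hxB, hyB, rfl⟩
  rw [← wedge_eq_cone turn] at hzc
  rcases Finset.mem_union.1 hz with hzA | hzB
  · rcases S.consec k hk ⟨hzA, hzc⟩ with h | h | h
    exacts [.inl h, .inr (.inl h), .inr (.inr (.inr (.inr h)))]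
  · rcases hBW.subset ⟨hzB, hzc⟩ with h | h
    exacts [.inr (.inr (.inl h)), .inr (.inr (.inr (.inl h)))]

end StarSetup

namespace Config

theorem exists_mem_left_notMem_core (C : Config x0 A B a f) (hA : 5 ≤ A.card) :
    ∃ z ∈ A, z ∉ core a f := by
  obtain ⟨z, hz, hne⟩ :=
    Finset.exists_mem_notMem_of_card_lt_card
      ((Finset.card_le_four (a := a) (b := f 1) (c := f 4) (d := f 7)).trans_lt hA)
  refine ⟨z, hz, ?_⟩
  rintro (rfl | ⟨k, ⟨h1k, hk7⟩, rfl⟩)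
  · simp at hne
  · interval_cases k
    any_goals simp at hne
    exacts [C.ne_of_mem hz C.mem₂ rfl, C.ne_of_mem hz C.mem₃ rfl, C.ne_of_mem hz C.mem₅ rfl,
      C.ne_of_mem hz C.mem₆ rfl]

theorem exists_mem_right_notMem_core (C : Config x0 A B a f) (hB : 5 ≤ B.card) :
    ∃ z ∈ B, z ∉ core a f := by
  obtain ⟨z, hz, hne⟩ :=
    Finset.exists_mem_notMem_of_card_lt_card
      ((Finset.card_le_four (a := f 2) (b := f 3) (c := f 5) (d := f 6)).trans_lt hB)
  refine ⟨z, hz, ?_⟩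
  rintro (rfl | ⟨k, ⟨h1k, hk7⟩, rfl⟩)
  · exact C.ne_of_mem C.mem₀ hz rfl
  · interval_cases k
    any_goals simp at hne
    exacts [C.ne_of_mem C.mem₁ hz rfl, C.ne_of_mem C.mem₄ hz rfl, C.ne_of_mem C.mem₇ hz rfl]

end Config

theorem StarSetup.exists_config (S : StarSetup x0 A) (hA : ∀ z ∈ A, z.1 < x0)
    (hB : ∀ z ∈ B, x0 < z.1) (gen : GenPos ↑(A ∪ B)) (noHole : ¬ ∃ H, DividedFiveHole A B H)
    (hk : 1 ≤ k) (hkt : k < S.t) (hw : S.w B k = 2) (hw' : S.w B (k + 1) = 2) :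
    ∃ f, Config x0 A B S.aStar f := by
  have t_le := S.t_le
  have hAB : Disjoint A B :=
    Finset.disjoint_left.2 fun z hzA hzB => (hA z hzA).not_gt (hB z hzB)
  have lbl_mem (j : ℕ) : S.lbl j ∈ A := Finset.mem_of_mem_erase (S.lbl_mem j)
  obtain ⟨g, G, hg₁, hg₂, hg₃, hg₄⟩ :=
    S.exists_clearFan gen hAB (Finset.mem_Icc.2 ⟨hk, by lia⟩) hw
  obtain ⟨h, H, hh₁, hh₂, hh₃, hh₄⟩ :=
    S.exists_clearFan gen hAB (Finset.mem_Icc.2 ⟨by lia, by lia⟩) hw'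
  rw [Nat.add_sub_cancel] at hh₁
  have turn : Ccw S.aStar (S.lbl (k + 1)) (S.lbl k) := hh₁ ▸ hh₄ ▸ H.fan.ccw
  obtain ⟨f, f_left, f_right, consecutive⟩ :=
    G.exists_append (l := 1) (d := 3) H (hg₄.trans hh₁.symm)
  have f₁ : f 1 = S.lbl (k - 1) := (f_left 1 (by decide)).trans hg₁
  have f₄ : f 4 = S.lbl k := (f_left 4 le_rfl).trans hg₄
  have f₇ : f 7 = S.lbl (k + 1) := (f_right 4 (by decide)).trans hh₄
  exact ⟨f, {
    left := hA
    right := hB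
    gen := fun x hx y hy z hz => orient_ne_zero_of_genPos gen hx hy hz
    mem₀ := S.aStar_mem
    mem₁ := f₁ ▸ lbl_mem _
    mem₂ := f_left 2 (by decide) ▸ hg₂
    mem₃ := f_left 3 (by decide) ▸ hg₃
    mem₄ := f₄ ▸ lbl_mem _
    mem₅ := f_right 2 (by decide) ▸ hh₂
    mem₆ := f_right 3 (by decide) ▸ hh₃
    mem₇ := f₇ ▸ lbl_mem _
    turn := fun j h1j hj7 => (consecutive j h1j hj7).1
    ccw₄₁ := by
      rw [f₁, f₄, ← hg₁, ← hg₄]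
      exact G.fan.ccw
    ccw₇₄ := by rwa [f₄, f₇]
    lt₄ := f₄ ▸ S.aStar_fst_lt_lbl hA hk hkt turn
    gap := fun j h1j hj7 => (consecutive j h1j hj7).2
    inner := fun x hx hlt u hu v hv w hw huv hvw hwu => hlt.not_ge
      (S.aStar_rightmost x hx (mem_interior_convexHull_of_ccw hu hv hw huv hvw hwu))
    noHole := noHole }⟩

end Wedges

/-- **Lemma 6.** Let `P = A ∪ B` be an `ℓ`-divided set with `A` not in convex position
and `|A|, |B| ≥ 5`. If `W_i` and `W_{i+1}` are consecutive `a*`-wedges with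
`w_i = 2 = w_{i+1}` and `1 ≤ i < t`, then there is an `ℓ`-divided 5-hole in `P`. -/
theorem two_two_consecutive_wedges
    (x0 : ℝ) (A B : Finset Pt)
    (hA : ∀ p ∈ A, p.1 < x0) (hB : ∀ p ∈ B, x0 < p.1)
    (hBne : B.Nonempty)
    (hgen : GenPos (↑(A ∪ B) : Set Pt))
    (hx : Set.InjOn Prod.fst (↑(A ∪ B) : Set Pt))
    (hAnc : ¬ ConvexPos (↑A : Set Pt))
    (S : StarSetup x0 A)
    (hAcard : 5 ≤ A.card) (hBcard : 5 ≤ B.card)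
    (i : ℕ) (hi : 1 ≤ i) (hit : i < S.t)
    (hwi : S.w B i = 2) (hwi1 : S.w B (i + 1) = 2) :
    ∃ H : Finset Pt, DividedFiveHole A B H := by
  by_contra noHole
  obtain ⟨f, C⟩ := S.exists_config hA hB hgen noHole hi hit hwi hwi1
  exact C.false (C.exists_mem_left_notMem_core hAcard) (C.exists_mem_right_notMem_core hBcard)

end
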